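/- Let F_k be a finitely generated free group and let φ be an injective endomorphism of F_k. Then for every sufficiently large prime p, the group HNN_φ(F_k) has a subgroup N of finite index such that N is residually (finite p) and N is itself an ascending HNN extension of a free group, i.e. N is generated by F_k ∩ N together with an element t₁ = t^m (for some m ≥ 1) satisfying t₁(F_k ∩ N)t₁⁻¹ ⊆ F_k ∩ N, with F_k ∩ N free. -/

import Mathlib

/-- The defining relations of the mapping torus (ascending HNN extension)
`HNN_φ(F_k) = ⟨x₁,…,x_k, t ∣ t xᵢ t⁻¹ = φ(xᵢ)⟩`, with generators `Option (Fin k)`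
where `none` is the stable letter `t` and `some i` is `xᵢ`. -/
def mappingTorusRels (k : ℕ) (φ : FreeGroup (Fin k) →* FreeGroup (Fin k)) :
    Set (FreeGroup (Option (Fin k))) :=
  { r | ∃ i : Fin k,
      r = FreeGroup.of none * FreeGroup.map Option.some (FreeGroup.of i) *
          (FreeGroup.of none)⁻¹ * (FreeGroup.map Option.some (φ (FreeGroup.of i)))⁻¹ }

/-- The mapping torus `HNN_φ(F_k)` of an endomorphism `φ` of the free group `F_k`. -/
abbrev MappingTorus (k : ℕ) (φ : FreeGroup (Fin k) →* FreeGroup (Fin k)) : Type :=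
  PresentedGroup (mappingTorusRels k φ)

/-- The copy of the free group `F_k` inside the mapping torus, i.e. the subgroup generated by
the images of `x₁,…,x_k`. -/
def freeFibre (k : ℕ) (φ : FreeGroup (Fin k) →* FreeGroup (Fin k)) :
    Subgroup (MappingTorus k φ) :=
  Subgroup.closure (Set.range fun i : Fin k => PresentedGroup.of (some i))

/-- A group `G` is residually (finite `p`) if every nontrivial element has a nontrivial
image under some homomorphism onto a finite `p`-group. -/
def ResiduallyFiniteP (p : ℕ) (G : Type*) [Group G] : Prop :=
  ∀ g : G, g ≠ 1 → ∃ (Q : Type) (_ : Group Q) (_ : Fintype Q) (f : G →* Q),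
    Function.Surjective f ∧ IsPGroup p Q ∧ f g ≠ 1

/-!
A tuple of `2 × 2` matrices over a commutative ring represents `F_k` in a projective linear group,
and precomposition with `φ` is a polynomial map on such tuples, with integer coefficients once
inverses are replaced by adjugates. A point of period `M` of this map over a finite ring is a finite
quotient `γ` of `F_k` with `γ ∘ φ^M = γ`, and so gives a homomorphism from the mapping torus to a
finite wreath product with a cyclic group of order `M`.

Over the algebraic closure of a prime field the `n`-th iterate of the polynomial map has
quasi-fixed points (Borisov and Sapir, after Hrushovski), at which it equals a power of Frobenius,
outside any hypersurface not containing its image. They are periodic. If `p` is large, such a point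
`a` of period `m` can be chosen so that the rank of the Jacobian of a high iterate at `a` is the
generic one. Newton iteration then lifts `a`, over the Witt vectors modulo powers of `p`, to points
of period `m * p ^ n`; by the choice of rank these lifts satisfy no polynomial relation that does
not hold on the image of the iterates, so they separate the elements of `F_k`. The kernel of
reduction modulo `p` is a `p`-group, whence a single subgroup of finite index, the kernel of the
homomorphism defined by `a`, has `p`-groups as images under all the homomorphisms defined by the
lifts.
-/

section PolynomialDynamics

open MvPolynomial

section PowerRelations

variable {ι K : Type*} [CommRing K] {f : ι → MvPolynomial ι K} {Q : ℕ}

theorem totalDegree_monomial_mul_lt {e d : ι →₀ ℕ} {g : MvPolynomial ι K} (hg : g.totalDegree < Q)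
    (hed : e.degree + Q ≤ d.degree) (c : K) : (monomial e c * g).totalDegree < d.degree := by
  have hmul := totalDegree_mul (monomial e c) g
  have hmon : (monomial e c).totalDegree ≤ e.degree := totalDegree_monomial_le e c
  omega

theorem mul_mem_of_forall_monomial_mul_mem {V : Submodule K (MvPolynomial ι K)}
    {u : MvPolynomial ι K} {n : ℕ} (hV : ∀ e : ι →₀ ℕ, e.degree < n → monomial e 1 * u ∈ V)
    {h : MvPolynomial ι K} (hh : h.totalDegree < n) : h * u ∈ V := by
  rw [h.as_sum, Finset.sum_mul]
  refine V.sum_mem fun e he => ?_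
  have hsmul : monomial e (coeff e h) = coeff e h • monomial e (1 : K) := by simp [smul_monomial]
  rw [hsmul, smul_mul_assoc]
  exact V.smul_mem _ (hV e ((le_totalDegree he).trans_lt hh))

section Standard

variable [LinearOrder ι]

/-- The multiples `X ^ e * (X i ^ Q - f i)` of the relations `X i ^ Q = f i` by those monomials
which are not divisible by any `X j ^ Q` with `j < i`. These have pairwise distinct leading
monomials `X ^ e * X i ^ Q`. -/
noncomputable def standardRelation (f : ι → MvPolynomial ι K) (Q : ℕ)
    (x : {x : ι × (ι →₀ ℕ) // ∀ j < x.1, x.2 j < Q}) : MvPolynomial ι K :=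
  monomial x.1.2 1 * (X x.1.1 ^ Q - f x.1.1)

theorem monomial_mul_mem_span_standardRelation [WellFoundedLT ι]
    (hf : ∀ i, (f i).totalDegree < Q) (e : ι →₀ ℕ) (i : ι) :
    monomial e 1 * (X i ^ Q - f i) ∈ Submodule.span K (Set.range (standardRelation f Q)) := by
  induction hn : e.degree using Nat.strong_induction_on generalizing e i with
  | _ n ih =>
  have ih_mul (h : MvPolynomial ι K) (hh : h.totalDegree < n) (i : ι) :=
    mul_mem_of_forall_monomial_mul_mem (fun e he => ih e.degree he e i rfl) hh
  by_cases hstd : ∀ j < i, e j < Q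
  · exact Submodule.subset_span ⟨⟨(i, e), hstd⟩, rfl⟩
  push Not at hstd
  obtain ⟨j, ⟨hji, hQj⟩, hjmin⟩ := WellFounded.has_min wellFounded_lt {j | j < i ∧ Q ≤ e j} hstd
  obtain ⟨e', rfl⟩ : ∃ e', e = e' + Finsupp.single j Q :=
    ⟨_, (tsub_add_cancel_of_le (Finsupp.single_le_iff.2 hQj)).symm⟩
  have hdeg : e'.degree + Q ≤ (e' + Finsupp.single j Q).degree := by simp
  have hlead : monomial (e' + Finsupp.single i Q) 1 * (X j ^ Q - f j) ∈
      Submodule.span K (Set.range (standardRelation f Q)) := by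
    refine Submodule.subset_span ⟨⟨(j, e' + Finsupp.single i Q), fun l hl => ?_⟩, rfl⟩
    have hle : ¬ Q ≤ (e' + Finsupp.single j Q) l := fun h => hjmin l ⟨hl.trans hji, h⟩ hl
    simpa [Finsupp.single_eq_of_ne hl.ne, Finsupp.single_eq_of_ne (hl.trans hji).ne] using hle
  have hj := ih_mul (monomial e' 1 * f j)
    (hn ▸ totalDegree_monomial_mul_lt (hf j) hdeg 1) i
  have hi := ih_mul (monomial e' 1 * f i)
    (hn ▸ totalDegree_monomial_mul_lt (hf i) hdeg 1) j
  convert Submodule.sub_mem _ (Submodule.add_mem _ hlead hj) hi using 1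
  have hadd (l : ι) : monomial (e' + Finsupp.single l Q) (1 : K) = monomial e' 1 * X l ^ Q := by
    rw [X_pow_eq_monomial, monomial_mul, one_mul]
  rw [hadd, hadd]
  ring

theorem coeff_standardRelation (hf : ∀ i, (f i).totalDegree < Q)
    (x : {x : ι × (ι →₀ ℕ) // ∀ j < x.1, x.2 j < Q}) {d : ι →₀ ℕ}
    (hd : x.1.2.degree + Q ≤ d.degree) :
    coeff d (standardRelation f Q x) = if x.1.2 + Finsupp.single x.1.1 Q = d then 1 else 0 := by
  rw [standardRelation, mul_sub, coeff_sub,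
    coeff_eq_zero_of_totalDegree_lt (totalDegree_monomial_mul_lt (hf x.1.1) hd 1), sub_zero,
    X_pow_eq_monomial, monomial_mul, one_mul, coeff_monomial]

theorem standardRelation_leading_injective :
    Function.Injective fun x : {x : ι × (ι →₀ ℕ) // ∀ j < x.1, x.2 j < Q} =>
      x.1.2 + Finsupp.single x.1.1 Q := by
  have not_lt_index {i j : ι} {e d : ι →₀ ℕ} (hd : ∀ l < j, d l < Q)
      (h : e + Finsupp.single i Q = d + Finsupp.single j Q) : ¬ i < j := fun hij => by
    have hi := DFunLike.congr_fun h i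
    simp only [Finsupp.add_apply, Finsupp.single_eq_same, Finsupp.single_eq_of_ne hij.ne] at hi
    have := hd i hij
    omega
  rintro ⟨⟨i, e⟩, he⟩ ⟨⟨j, d⟩, hd⟩ (h : e + Finsupp.single i Q = d + Finsupp.single j Q)
  obtain rfl : i = j := le_antisymm (not_lt.1 (not_lt_index he h.symm))
    (not_lt.1 (not_lt_index hd h))
  simpa using h

theorem eq_zero_of_mem_span_standardRelation (hf : ∀ i, (f i).totalDegree < Q)
    {g : MvPolynomial ι K} (hg : g.totalDegree < Q)
    (hmem : g ∈ Submodule.span K (Set.range (standardRelation f Q))) : g = 0 := by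
  obtain ⟨c, rfl⟩ := Finsupp.mem_span_range_iff_exists_finsupp.1 hmem
  suffices c = 0 by simp [this]
  by_contra hc
  obtain ⟨x, hx, hmax⟩ := c.support.exists_max_image (fun y => y.1.2.degree)
    (Finsupp.support_nonempty_iff.2 hc)
  have hcoeff : coeff (x.1.2 + Finsupp.single x.1.1 Q) (c.sum fun y a => a • standardRelation f Q y)
      = c x := by
    rw [Finsupp.sum, coeff_sum, Finset.sum_eq_single x]
    · rw [coeff_smul, coeff_standardRelation hf x (by simp), if_pos rfl, smul_eq_mul, mul_one]
    · intro y hy hyx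
      rw [coeff_smul, coeff_standardRelation hf y (by simpa using hmax y hy),
        if_neg (standardRelation_leading_injective.ne hyx), smul_zero]
    · exact fun h => absurd hx h
  refine Finsupp.mem_support_iff.1 hx (hcoeff ▸ coeff_eq_zero_of_totalDegree_lt (hg.trans_le ?_))
  rw [← Finsupp.degree_apply, map_add, Finsupp.degree_single]
  exact Nat.le_add_left _ _

end Standard

/-- The ideal of the relations `X i ^ Q = f i`. Over a field of characteristic `p` and with `Q` a
power of `p`, its zeros are the quasi-fixed points of the polynomial map `f`. -/
noncomputable def powerIdeal (f : ι → MvPolynomial ι K) (Q : ℕ) : Ideal (MvPolynomial ι K) :=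
  Ideal.span (Set.range fun i => X i ^ Q - f i)

theorem eq_zero_of_mem_powerIdeal (hf : ∀ i, (f i).totalDegree < Q) {g : MvPolynomial ι K}
    (hg : g.totalDegree < Q) (hmem : g ∈ powerIdeal f Q) : g = 0 := by
  let _ : LinearOrder ι := IsWellOrder.linearOrder WellOrderingRel
  have : WellFoundedLT ι := inferInstanceAs (IsWellFounded ι WellOrderingRel)
  refine eq_zero_of_mem_span_standardRelation hf hg ?_
  obtain ⟨c, rfl⟩ := Finsupp.mem_ideal_span_range_iff_exists_finsupp.1 hmem
  exact Submodule.sum_mem _ fun i _ => mul_mem_of_forall_monomial_mul_mem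
    (fun e _ => monomial_mul_mem_span_standardRelation hf e i) (Nat.lt_succ_self _)

theorem mk_X_pow_eq (i : ι) : Ideal.Quotient.mk (powerIdeal f Q) (X i) ^ Q =
    Ideal.Quotient.mk (powerIdeal f Q) (f i) := by
  rw [← map_pow, Ideal.Quotient.mk_eq_mk_iff_sub_mem]
  exact Ideal.subset_span ⟨i, rfl⟩

section Finite

variable [Fintype ι]

theorem span_range_mk_prod_X_pow_eq_top (hf : ∀ i, (f i).totalDegree < Q) :
    Submodule.span K (Set.range fun e : ι → Fin Q =>
      ∏ i, Ideal.Quotient.mk (powerIdeal f Q) (X i) ^ (e i : ℕ)) = ⊤ := by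
  set W := Submodule.span K (Set.range fun e : ι → Fin Q =>
      ∏ i, Ideal.Quotient.mk (powerIdeal f Q) (X i) ^ (e i : ℕ))
  let V := W.comap (Ideal.Quotient.mkₐ K (powerIdeal f Q)).toLinearMap
  have mem_of_monomial {n : ℕ} (hV : ∀ e : ι →₀ ℕ, e.degree < n → monomial e 1 ∈ V)
      {h : MvPolynomial ι K} (hh : h.totalDegree < n) : h ∈ V := by
    simpa using mul_mem_of_forall_monomial_mul_mem (V := V) (u := 1) (by simpa using hV) hh
  suffices hmon : ∀ e : ι →₀ ℕ, monomial e 1 ∈ V by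
    refine eq_top_iff.2 fun b _ => ?_
    obtain ⟨h, rfl⟩ := Ideal.Quotient.mk_surjective b
    exact mem_of_monomial (fun e _ => hmon e) (Nat.lt_succ_self h.totalDegree)
  intro e
  induction hn : e.degree using Nat.strong_induction_on generalizing e with
  | _ n ih =>
  by_cases hred : ∀ j, e j < Q
  · refine Submodule.subset_span ⟨fun j => ⟨e j, hred j⟩, ?_⟩
    simp [monomial_eq, Finsupp.prod_fintype]
  push Not at hred
  obtain ⟨j, hQj⟩ := hred
  obtain ⟨e', rfl⟩ : ∃ e', e = e' + Finsupp.single j Q :=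
    ⟨_, (tsub_add_cancel_of_le (Finsupp.single_le_iff.2 hQj)).symm⟩
  have hdeg : (monomial e' 1 * f j).totalDegree < n :=
    hn ▸ totalDegree_monomial_mul_lt (hf j) (by simp) 1
  have hmem := mem_of_monomial (fun e he => ih _ he e rfl) hdeg
  have hmk : Ideal.Quotient.mk (powerIdeal f Q) (monomial (e' + Finsupp.single j Q) 1) =
      Ideal.Quotient.mk (powerIdeal f Q) (monomial e' 1 * f j) := by
    rw [map_mul, ← mk_X_pow_eq, ← map_pow, ← map_mul, X_pow_eq_monomial, monomial_mul, one_mul]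
  exact (congrArg (· ∈ W) hmk).mpr hmem

end Finite
end PowerRelations

section Field

variable {ι k : Type*} [Field k]

theorem finrank_quotient_powerIdeal_le [Fintype ι] {f : ι → MvPolynomial ι k} {Q : ℕ}
    (hf : ∀ i, (f i).totalDegree < Q) :
    Module.finrank k (MvPolynomial ι k ⧸ powerIdeal f Q) ≤ Q ^ Fintype.card ι := by
  classical
  rw [← finrank_top, ← span_range_mk_prod_X_pow_eq_top hf]
  refine (finrank_range_le_card _).trans_eq ?_
  simp

theorem finite_quotient_powerIdeal [Finite ι] {f : ι → MvPolynomial ι k} {Q : ℕ}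
    (hf : ∀ i, (f i).totalDegree < Q) :
    Module.Finite k (MvPolynomial ι k ⧸ powerIdeal f Q) := by
  have := Fintype.ofFinite ι
  exact ⟨span_range_mk_prod_X_pow_eq_top hf ▸ Submodule.fg_span (Set.finite_range _)⟩

theorem pow_finrank_eq_zero_of_isNilpotent {B : Type*} [CommRing B] [Algebra k B]
    [Module.Finite k B] {y : B} (hy : IsNilpotent y) : y ^ Module.finrank k B = 0 := by
  have hlmul : IsNilpotent (Algebra.lmul k B y) := hy.map (Algebra.lmul k B)
  have hpow := LinearMap.aeval_self_charpoly (Algebra.lmul k B y)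
  rw [hlmul.charpoly_eq_X_pow_finrank, map_pow, Polynomial.aeval_X, ← map_pow] at hpow
  simpa using LinearMap.congr_fun hpow 1

theorem exists_algHom_ne_zero_of_not_isNilpotent [IsAlgClosed k] {B : Type*} [CommRing B]
    [Algebra k B] [Algebra.IsIntegral k B] {y : B} (hy : ¬ IsNilpotent y) :
    ∃ θ : B →ₐ[k] k, θ y ≠ 0 := by
  simp only [nilpotent_iff_mem_prime, not_forall] at hy
  obtain ⟨m, hm, hym⟩ := hy
  let e : k ≃ₐ[k] B ⧸ m := AlgEquiv.ofBijective (Algebra.ofId k (B ⧸ m))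
    IsAlgClosed.algebraMap_bijective_of_isIntegral
  refine ⟨(e.symm : B ⧸ m →ₐ[k] k).comp (Ideal.Quotient.mkₐ k m), ?_⟩
  simpa [Ideal.Quotient.eq_zero_iff_mem] using hym

end Field

section PolyMap

variable {ι κ μ R A B : Type*} [CommRing R] [CommRing A] [CommRing B] [Algebra R A] [Algebra R B]

/-- The map between affine spaces over `A` given by polynomials `f` with coefficients in `R`. -/
noncomputable def polyMap (f : κ → MvPolynomial ι R) (z : ι → A) : κ → A :=
  fun i => aeval z (f i)

theorem algHom_comp_polyMap (f : κ → MvPolynomial ι R) (θ : A →ₐ[R] B) (z : ι → A) :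
    θ ∘ polyMap f z = polyMap f (θ ∘ z) :=
  _root_.funext fun i => comp_aeval_apply z θ (f i)

theorem aeval_polyMap (D : MvPolynomial κ R) (f : κ → MvPolynomial ι R) (z : ι → A) :
    aeval (polyMap f z) D = aeval z (aeval f D) :=
  (comp_aeval_apply f (aeval z) D).symm

theorem algHom_comp_polyMap_iterate (f : ι → MvPolynomial ι R) (θ : A →ₐ[R] B) (n : ℕ)
    (z : ι → A) : θ ∘ (polyMap f)^[n] z = (polyMap f)^[n] (θ ∘ z) :=
  Function.Semiconj.iterate_right (f := (θ ∘ ·)) (algHom_comp_polyMap f θ) n z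

/-- The polynomials defining the `n`-th iterate of `polyMap f`. -/
noncomputable def polyIter (f : ι → MvPolynomial ι R) (n : ℕ) : ι → MvPolynomial ι R :=
  (polyMap f)^[n] X

theorem polyMap_polyIter (f : ι → MvPolynomial ι R) (n : ℕ) (z : ι → A) :
    polyMap (polyIter f n) z = (polyMap f)^[n] z :=
  (algHom_comp_polyMap_iterate f (aeval z) n X).trans
    (congrArg _ (_root_.funext fun i => aeval_X z i))

theorem polyIter_add (f : ι → MvPolynomial ι R) (m n : ℕ) :
    polyIter f (m + n) = polyMap (polyIter f m) (polyIter f n) := by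
  rw [polyMap_polyIter, polyIter, Function.iterate_add_apply, polyIter]

end PolyMap

section QuasiFixed

variable {ι A : Type*} [CommRing A] (p : ℕ) [Fact p.Prime] [CharP A p]

theorem aeval_pow_char_pow (r : ℕ) (z : ι → A) (D : MvPolynomial ι ℤ) :
    aeval z D ^ p ^ r = aeval (fun i => z i ^ p ^ r) D :=
  comp_aeval_apply z (iterateFrobenius A p r).toIntAlgHom D

theorem polyMap_iterate_eq_pow (f : ι → MvPolynomial ι ℤ) {r : ℕ} {z : ι → A}
    (hz : polyMap f z = fun i => z i ^ p ^ r) (n : ℕ) :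
    (polyMap f)^[n] z = fun i => z i ^ p ^ (r * n) := by
  induction n with
  | zero => simp
  | succ n ih =>
    ext i
    rw [Function.iterate_succ_apply', ih, polyMap, ← aeval_pow_char_pow, Nat.mul_succ, pow_add,
      pow_mul' (z i), ← congrFun hz i, polyMap]

variable {k : Type*} [Field k] [IsAlgClosed k] [CharP k p]

theorem exists_polyMap_eq_pow_of_finite {B : Type*} [CommRing B] [Algebra k B] [Module.Finite k B]
    {f : ι → MvPolynomial ι ℤ} {D : MvPolynomial ι ℤ} {r n : ℕ} {x : ι → B}
    (hx : polyMap f x = fun i => x i ^ p ^ r) (hn : Module.finrank k B ≤ p ^ (r * n))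
    (hD : aeval ((polyMap f)^[n] x) D ≠ 0) :
    ∃ a : ι → k, (polyMap f a = fun i => a i ^ p ^ r) ∧ aeval a D ≠ 0 := by
  have := nontrivial_of_ne _ _ hD
  have := charP_of_injective_algebraMap (algebraMap k B).injective p
  rw [polyMap_iterate_eq_pow p f hx, ← aeval_pow_char_pow] at hD
  obtain ⟨θ, hθ⟩ := exists_algHom_ne_zero_of_not_isNilpotent (k := k) (y := aeval x D)
    fun h => hD (pow_eq_zero_of_le hn (pow_finrank_eq_zero_of_isNilpotent (k := k) h))
  let θ' : B →ₐ[ℤ] k := (θ : B →+* k).toIntAlgHom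
  refine ⟨θ' ∘ x, ?_, (comp_aeval_apply x θ' D).symm.trans_ne hθ⟩
  refine (algHom_comp_polyMap_iterate f θ' 1 x).symm.trans ?_
  rw [Function.iterate_one, hx]
  exact _root_.funext fun i => map_pow θ' (x i) _

/-- Hrushovski's quasi-fixed points in the elementary form of Borisov and Sapir. -/
theorem exists_polyMap_eq_pow_aeval_ne_zero [Fintype ι] {f : ι → MvPolynomial ι ℤ}
    {D : MvPolynomial ι ℤ}
    (hD : aeval ((polyMap f)^[Fintype.card ι] (X : ι → MvPolynomial ι k)) D ≠ 0) :
    ∃ (r : ℕ) (a : ι → k), (polyMap f a = fun i => a i ^ p ^ r) ∧ aeval a D ≠ 0 := by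
  set n := Fintype.card ι
  set g : ι → MvPolynomial ι k := polyMap f X
  set P : MvPolynomial ι k := aeval ((polyMap f)^[n] X) D
  obtain ⟨r, hr⟩ : ∃ r, P.totalDegree + ∑ i, (g i).totalDegree < p ^ r :=
    ⟨_, Nat.lt_pow_self (Fact.out : p.Prime).one_lt⟩
  have hg (i : ι) : (g i).totalDegree < p ^ r :=
    (((Finset.single_le_sum (fun _ _ => Nat.zero_le _) (Finset.mem_univ i)).trans
      (Nat.le_add_left _ _)).trans_lt hr)
  let J := powerIdeal g (p ^ r)
  let mk := (Ideal.Quotient.mk J).toIntAlgHom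
  have hcomm (j : ℕ) : mk ∘ (polyMap f)^[j] X = (polyMap f)^[j] (mk ∘ X) :=
    algHom_comp_polyMap_iterate f mk j X
  have := finite_quotient_powerIdeal hg
  refine ⟨r, exists_polyMap_eq_pow_of_finite (B := MvPolynomial ι k ⧸ J) (x := mk ∘ X) (n := n) p
    (_root_.funext fun i => (congrFun (hcomm 1) i).symm.trans (mk_X_pow_eq i).symm)
    (pow_mul p r n ▸ finrank_quotient_powerIdeal_le hg) fun h => ?_⟩
  refine hD (eq_zero_of_mem_powerIdeal hg (le_self_add.trans_lt hr)
    (Ideal.Quotient.eq_zero_iff_mem.1 (Eq.trans ?_ h)))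
  exact (comp_aeval_apply _ mk D).trans (congrArg (fun z => aeval z D) (hcomm n))

end QuasiFixed

section ChainRule

variable {ι κ μ R A B M : Type*} [CommRing R] [CommRing A] [Algebra R A] [CommRing B] [Algebra R B]
  [AddCommGroup M] [Module A M]

theorem sum_aeval_pderiv_X_smul [Fintype ι] (u : ι → A) (m : ι → M) (i : ι) :
    ∑ l, aeval u (pderiv l (X i : MvPolynomial ι R)) • m l = m i := by
  rw [Finset.sum_eq_single i (fun l _ hl => by simp [hl.symm]) (by simp)]
  simp

theorem derivation_aeval [Fintype ι] [Module R M] (δ : Derivation R A M) (u : ι → A)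
    (D : MvPolynomial ι R) : δ (aeval u D) = ∑ l, aeval u (pderiv l D) • δ (u l) := by
  induction D using MvPolynomial.induction_on with
  | C a => simp
  | add p q hp hq => simp only [map_add, hp, hq, add_smul, Finset.sum_add_distrib]
  | mul_X p i hp =>
    simp only [map_mul, Derivation.leibniz, hp, map_add, aeval_X, add_smul, smul_eq_mul,
      mul_smul, Finset.sum_add_distrib, ← Finset.smul_sum, sum_aeval_pderiv_X_smul]

theorem aeval_add_mul_sModEq [Fintype ι] (ε : A) (y w : ι → A) (D : MvPolynomial ι R) :
    aeval (fun i => y i + ε * w i) D ≡ aeval y D + ε * ∑ l, aeval y (pderiv l D) * w l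
      [SMOD Ideal.span {ε ^ 2}] := by
  induction D using MvPolynomial.induction_on with
  | C a => simp [SModEq.refl]
  | add p q hp hq =>
    convert hp.add hq using 1
    · simp
    · simp only [map_add, add_mul, Finset.sum_add_distrib]
      ring
  | mul_X p i hp =>
    have hsum : ∑ l, aeval y (pderiv l (p * X i)) * w l =
        aeval y p * w i + y i * ∑ l, aeval y (pderiv l p) * w l := by
      simpa only [Derivation.leibniz, smul_eq_mul, map_add, map_mul, aeval_X, add_mul,
        Finset.sum_add_distrib, mul_assoc, ← Finset.mul_sum, add_left_inj] using
        congrArg (aeval y p * ·) (sum_aeval_pderiv_X_smul (R := R) y w i)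
    rw [hsum, map_mul, map_mul, aeval_X, aeval_X]
    refine (hp.mul SModEq.rfl).trans (SModEq.sub_mem.2 (Ideal.mem_span_singleton.2
      ⟨(∑ l, aeval y (pderiv l p) * w l) * w i, ?_⟩))
    ring

/-- The Jacobian matrix of the polynomials `F` at the point `z`. -/
noncomputable def jacobian (F : κ → MvPolynomial ι R) (z : ι → A) : Matrix κ ι A :=
  Matrix.of fun i j => aeval z (pderiv j (F i))

theorem jacobian_map (F : κ → MvPolynomial ι R) (θ : A →ₐ[R] B) (z : ι → A) :
    (jacobian F z).map θ = jacobian F (θ ∘ z) := by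
  ext i j
  exact comp_aeval_apply z θ _

theorem algHom_comp_jacobian_mulVec [Fintype ι] (F : κ → MvPolynomial ι R) (θ : A →ₐ[R] B)
    (z v : ι → A) : θ ∘ (jacobian F z).mulVec v = (jacobian F (θ ∘ z)).mulVec (θ ∘ v) := by
  rw [← jacobian_map]
  exact _root_.funext (RingHom.map_mulVec (θ : A →+* B) (jacobian F z) v)

theorem jacobian_X [DecidableEq ι] (z : ι → A) : jacobian (X : ι → MvPolynomial ι R) z = 1 := by
  ext i j
  obtain rfl | hij := eq_or_ne i j
  · simp [jacobian]
  · simp [jacobian, hij]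

theorem jacobian_polyMap [Fintype ι] (F : κ → MvPolynomial ι R) (G : ι → MvPolynomial μ R)
    (z : μ → A) : jacobian (polyMap F G) z = jacobian F (polyMap G z) * jacobian G z := by
  ext i j
  simp only [jacobian, polyMap, Matrix.of_apply, Matrix.mul_apply,
    derivation_aeval (pderiv j) G (F i), map_sum, smul_eq_mul, map_mul, comp_aeval_apply]
  rfl

theorem polyMap_add_mul_sModEq [Fintype ι] (F : κ → MvPolynomial ι R) (ε : A) (y w : ι → A)
    (i : κ) : polyMap F (fun i => y i + ε * w i) i ≡
      polyMap F y i + ε * (jacobian F y).mulVec w i [SMOD Ideal.span {ε ^ 2}] :=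
  aeval_add_mul_sModEq ε y w (F i)

end ChainRule

section Iterates

variable {ι R A : Type*} [CommRing R] [CommRing A] [Algebra R A] (f : ι → MvPolynomial ι R)

theorem jacobian_polyIter_zero [DecidableEq ι] (z : ι → A) : jacobian (polyIter f 0) z = 1 :=
  jacobian_X z

variable [Fintype ι]

theorem jacobian_polyIter_add (m n : ℕ) (z : ι → A) : jacobian (polyIter f (m + n)) z =
    jacobian (polyIter f m) ((polyMap f)^[n] z) * jacobian (polyIter f n) z := by
  rw [polyIter_add, jacobian_polyMap, polyMap_polyIter]

theorem jacobian_polyIter_mul_of_isFixedPt [DecidableEq ι] {n : ℕ} {z : ι → A}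
    (hz : Function.IsFixedPt (polyMap f)^[n] z) (m : ℕ) :
    jacobian (polyIter f (n * m)) z = jacobian (polyIter f n) z ^ m := by
  induction m with
  | zero => exact jacobian_polyIter_zero f z
  | succ m ih =>
    have hfix : (polyMap f)^[n * m] z = z := by
      rw [Function.iterate_mul]
      exact hz.iterate m
    rw [Nat.mul_succ, add_comm, jacobian_polyIter_add, hfix, ih, pow_succ']

end Iterates

section Criterion

variable {R A M : Type*} [CommRing R] [CommRing A] [IsDomain A] [Algebra R A] [AddCommGroup M]
  [Module A M] [Module R M]

theorem derivation_eq_zero_of_isAlgebraic [CharZero A] [FaithfulSMul R A]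
    [Algebra.IsAlgebraic R A] [Module.IsTorsionFree A M] (δ : Derivation R A M) : δ = 0 := by
  have hinj := FaithfulSMul.algebraMap_injective R A
  have : IsDomain R := hinj.isDomain
  have : CharZero R := (algebraMap R A).charZero_iff hinj |>.2 inferInstance
  ext x
  by_contra hx
  obtain ⟨q, ⟨hq, hqx⟩, hmin⟩ := Polynomial.degree_lt_wf.has_min
    {q : Polynomial R | q ≠ 0 ∧ Polynomial.aeval x q = 0}
    (Algebra.IsAlgebraic.isAlgebraic (R := R) x)
  have hderiv : Polynomial.aeval x q.derivative = 0 := by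
    have hδ := δ.map_aeval q x
    rw [hqx, map_zero, eq_comm, smul_eq_zero] at hδ
    exact hδ.resolve_right hx
  have hconst : q.derivative = 0 := by
    by_contra hne
    exact hmin _ ⟨hne, hderiv⟩ (Polynomial.degree_derivative_lt hq)
  rw [Polynomial.eq_C_of_derivative_eq_zero hconst, Polynomial.aeval_C, map_eq_zero_iff _ hinj]
    at hqx
  exact hq (by rw [Polynomial.eq_C_of_derivative_eq_zero hconst, hqx, map_zero])

theorem derivation_eq_zero_of_isTranscendenceBasis [CharZero A] [Module.IsTorsionFree A M]
    {κ : Type*} {x : κ → A} (hx : IsTranscendenceBasis R x) (δ : Derivation R A M)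
    (hδ : ∀ i, δ (x i) = 0) : δ = 0 := by
  let S := Algebra.adjoin R (Set.range x)
  have hS (s : S) : δ s = 0 :=
    Derivation.eqOn_adjoin (D2 := 0) (by rintro _ ⟨i, rfl⟩; simpa using hδ i) s.2
  let δ' : Derivation S A M := Derivation.mk'
    { δ with map_smul' := fun s a => by simp [Subalgebra.smul_def, hS] } fun a b => by simp
  have := (algebraMap R A).domain_nontrivial
  have := hx.isAlgebraic
  ext a
  exact DFunLike.congr_fun (derivation_eq_zero_of_isAlgebraic δ') a

end Criterion

section Independence

variable {ι κ R K : Type*} [CommRing R] [IsDomain R] [CharZero R] [Field K] [Algebra R K]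
  [Algebra (MvPolynomial ι R) K] [IsScalarTower R (MvPolynomial ι R) K]
  [FaithfulSMul (MvPolynomial ι R) K]

theorem eq_zero_of_forall_sum_pderiv_eq_zero [Fintype ι] {x : κ → MvPolynomial ι R}
    (hx : IsTranscendenceBasis R x) {v : ι → K}
    (hv : ∀ a, ∑ l, algebraMap _ K (pderiv l (x a)) * v l = 0) : v = 0 := by
  let δ : Derivation R (MvPolynomial ι R) K := mkDerivation R v
  have hδ : δ = 0 := derivation_eq_zero_of_isTranscendenceBasis hx δ fun a => by
    simpa [δ, Algebra.smul_def, hv a] using derivation_aeval δ X (x a)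
  ext l
  simpa [δ] using DFunLike.congr_fun hδ (X l)

theorem linearIndependent_pderiv [Finite ι] {y : κ → MvPolynomial ι R}
    (hy : AlgebraicIndependent R y) :
    LinearIndependent K fun a l => algebraMap (MvPolynomial ι R) K (pderiv l (y a)) := by
  classical
  have := Fintype.ofFinite ι
  obtain ⟨u, hu, hbasis⟩ := exists_isTranscendenceBasis_superset hy.coe_range
  obtain ⟨e⟩ : Nonempty (ι ≃ u) := by
    rw [← Cardinal.lift_mk_eq']
    simpa [MvPolynomial.trdeg_of_isDomain] using hbasis.lift_cardinalMk_eq_trdeg.symm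
  let M : Matrix ι ι K := Matrix.of fun i j => algebraMap _ K (pderiv j (e i : MvPolynomial ι R))
  have hM : LinearIndependent K M.row := by
    rw [Matrix.linearIndependent_rows_iff_isUnit, ← Matrix.mulVec_injective_iff_isUnit]
    refine (injective_iff_map_eq_zero M.mulVecLin).2 fun v hv =>
      eq_zero_of_forall_sum_pderiv_eq_zero hbasis fun a => ?_
    simpa [M, Matrix.mulVec, dotProduct] using congrFun hv (e.symm a)
  convert hM.comp (fun a => e.symm ⟨y a, hu ⟨a, rfl⟩⟩)
    (e.symm.injective.comp fun a b hab => hy.injective (congrArg Subtype.val hab)) using 1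
  ext a l
  change _ = algebraMap _ K (pderiv l (e (e.symm _) : MvPolynomial ι R))
  rw [e.apply_symm_apply]

end Independence

section Rank

variable {K m n : Type*} [Field K] [Fintype n]

theorem exists_linearIndependent_rows_of_le_rank [Finite m] (M : Matrix m n K) {d : ℕ}
    (h : d ≤ M.rank) : ∃ r : Fin d → m, LinearIndependent K (M.submatrix r id).row := by
  rw [Matrix.rank_eq_finrank_span_row] at h
  obtain ⟨v, hv, -, hli⟩ := Submodule.exists_fun_fin_finrank_span_eq K (Set.range M.row)
  choose r hr using hv
  refine ⟨r ∘ Fin.castLE h, ?_⟩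
  have hrows : (M.submatrix (r ∘ Fin.castLE h) id).row = v ∘ Fin.castLE h :=
    _root_.funext fun i => hr _
  exact hrows ▸ hli.comp _ (Fin.castLE_injective h)

theorem le_rank_iff_exists_det_submatrix_ne_zero [Finite m] (M : Matrix m n K) {d : ℕ} :
    d ≤ M.rank ↔ ∃ (r : Fin d → m) (c : Fin d → n), (M.submatrix r c).det ≠ 0 := by
  refine ⟨fun h => ?_, fun ⟨r, c, h⟩ => ?_⟩
  · obtain ⟨r, hr⟩ := exists_linearIndependent_rows_of_le_rank M h
    obtain ⟨c, hc⟩ := exists_linearIndependent_rows_of_le_rank (d := d) (M.submatrix r id).transpose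
      (by rw [Matrix.rank_transpose, hr.rank_matrix, Fintype.card_fin])
    rw [Matrix.linearIndependent_rows_iff_isUnit, Matrix.isUnit_iff_isUnit_det] at hc
    exact ⟨r, c, (Matrix.det_transpose (M.submatrix r c)).symm.trans_ne hc.ne_zero⟩
  · rw [← Fintype.card_fin d, ← Matrix.rank_of_det_ne_zero h]
    exact Matrix.rank_submatrix_le _ _ _

theorem le_rank_mul_mul [Fintype m] {l o : Type*} [Fintype o] (A : Matrix l m K)
    (B : Matrix m n K) (C : Matrix n o K) (h : B.rank ≤ (B * C).rank) :
    (A * B).rank ≤ (A * (B * C)).rank := by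
  have hrange : LinearMap.range (B * C).mulVecLin = LinearMap.range B.mulVecLin :=
    Submodule.eq_of_le_of_finrank_le
      (Matrix.mulVecLin_mul B C ▸ LinearMap.range_comp_le_range _ _) h
  rw [Matrix.rank, Matrix.rank, Matrix.mulVecLin_mul A (B * C), LinearMap.range_comp, hrange,
    ← LinearMap.range_comp, ← Matrix.mulVecLin_mul]

theorem le_rank_jacobian_polyIter {R : Type*} [CommRing R] [Algebra R K]
    {f : n → MvPolynomial n R} {l d : ℕ}
    (hle : ∀ z : n → K, (jacobian (polyIter f l) z).rank ≤ d) {b : n → K}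
    (hb : ∀ i, d ≤ (jacobian (polyIter f (l + 1)) ((polyMap f)^[i] b)).rank) (j : ℕ) :
    d ≤ (jacobian (polyIter f j) b).rank := by
  have hlj : d ≤ (jacobian (polyIter f (l + j)) b).rank := by
    induction j with
    | zero =>
      have h := hb 0
      rw [add_comm l 1, jacobian_polyIter_add] at h
      exact h.trans (Matrix.rank_mul_le_right _ _)
    | succ j ih =>
      have h := hb j
      rw [add_comm l 1, jacobian_polyIter_add, ← Function.iterate_add_apply] at h
      rw [jacobian_polyIter_add] at ih
      rw [← add_assoc, add_comm _ 1, jacobian_polyIter_add, jacobian_polyIter_add f l j]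
      exact h.trans (le_rank_mul_mul _ _ _ ((hle _).trans ih))
  rw [jacobian_polyIter_add] at hlj
  exact hlj.trans (Matrix.rank_mul_le_right _ _)

end Rank

section GenericRank

variable {ι κ μ R A : Type*} [CommRing R]

theorem aeval_det_submatrix_jacobian [CommRing A] [Algebra R A] (F : κ → MvPolynomial ι R)
    {d : ℕ} (r : Fin d → κ) (c : Fin d → ι) (z : ι → A) :
    aeval z ((jacobian F (X : ι → MvPolynomial ι R)).submatrix r c).det =
      ((jacobian F z).submatrix r c).det := by
  have hz : aeval z ∘ (X : ι → MvPolynomial ι R) = z := _root_.funext fun i => aeval_X z i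
  rw [AlgHom.map_det, AlgHom.mapMatrix_apply, ← Matrix.submatrix_map, jacobian_map, hz]

variable [Fintype ι] [IsDomain R]

/-- The rank of the Jacobian matrix of `F` over the field of rational functions. -/
noncomputable def genericRank (F : κ → MvPolynomial ι R) : ℕ :=
  ((jacobian F (X : ι → MvPolynomial ι R)).map
    (algebraMap _ (FractionRing (MvPolynomial ι R)))).rank

theorem rank_jacobian_le_genericRank [Finite κ] {K : Type*} [Field K] [Algebra R K]
    (F : κ → MvPolynomial ι R) (z : ι → K) : (jacobian F z).rank ≤ genericRank F := by
  obtain ⟨r, c, hrc⟩ := (le_rank_iff_exists_det_submatrix_ne_zero (jacobian F z)).1 le_rfl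
  refine (le_rank_iff_exists_det_submatrix_ne_zero _).2 ⟨r, c, fun h => hrc ?_⟩
  rw [Matrix.submatrix_map, ← RingHom.mapMatrix_apply, ← RingHom.map_det,
    map_eq_zero_iff _ (IsFractionRing.injective _ _)] at h
  rw [← aeval_det_submatrix_jacobian, h, map_zero]

theorem exists_minor_ne_zero_of_le_genericRank_polyMap [Finite κ] [Finite μ]
    {F : κ → MvPolynomial μ R} {G : μ → MvPolynomial ι R} {d : ℕ}
    (h : d ≤ genericRank (polyMap F G)) : ∃ (r : Fin d → κ) (c : Fin d → μ),
      aeval G ((jacobian F (X : μ → MvPolynomial μ R)).submatrix r c).det ≠ 0 := by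
  have := Fintype.ofFinite μ
  have hX : polyMap G (X : ι → MvPolynomial ι R) = G := _root_.funext fun i => aeval_X_left_apply _
  rw [genericRank, jacobian_polyMap, Matrix.map_mul, hX] at h
  obtain ⟨r, c, hrc⟩ := (le_rank_iff_exists_det_submatrix_ne_zero _).1
    (h.trans (Matrix.rank_mul_le_left _ _))
  refine ⟨r, c, fun h0 => hrc ?_⟩
  rw [Matrix.submatrix_map, ← RingHom.mapMatrix_apply, ← RingHom.map_det,
    ← aeval_det_submatrix_jacobian, h0, map_zero]

theorem genericRank_polyMap_le [Finite μ] (F : κ → MvPolynomial μ R)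
    (G : μ → MvPolynomial ι R) : genericRank (polyMap F G) ≤ genericRank G := by
  have := Fintype.ofFinite μ
  rw [genericRank, jacobian_polyMap, Matrix.map_mul]
  exact Matrix.rank_mul_le_right _ _

variable [CharZero R]

theorem genericRank_eq_card_of_algebraicIndependent [Fintype κ] {F : κ → MvPolynomial ι R}
    (hF : AlgebraicIndependent R F) : genericRank F = Fintype.card κ := by
  refine LinearIndependent.rank_matrix ?_
  convert linearIndependent_pderiv (K := FractionRing (MvPolynomial ι R)) hF using 3
  simp [jacobian, Matrix.row]

end GenericRank

theorem exists_ne_zero_dvd_aeval_of_not_algebraicIndependent {κ R A : Type*} [CommRing R]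
    [CommRing A] [IsDomain A] [Algebra R A] {G : A} (hG : G ≠ 0) {U : κ → A}
    (h : ¬ AlgebraicIndependent R fun o : Option κ => o.elim G U) :
    ∃ D : MvPolynomial κ R, D ≠ 0 ∧ G ∣ aeval U D := by
  by_cases hU : AlgebraicIndependent R U
  · have hGalg : IsAlgebraic (Algebra.adjoin R (Set.range U)) G :=
      not_not.1 fun ht => h (AlgebraicIndependent.option_iff.2 ⟨hU, ht⟩)
    obtain ⟨⟨y, hy⟩, hy0, hdvd⟩ :=
      hGalg.exists_nonzero_dvd (mem_nonZeroDivisors_of_ne_zero hG)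
    rw [Algebra.adjoin_range_eq_range_aeval] at hy
    obtain ⟨D, rfl⟩ := hy
    refine ⟨D, fun hD => hy0 (Subtype.ext ?_), hdvd⟩
    simp [hD]
  · rw [algebraicIndependent_iff] at hU
    push Not at hU
    obtain ⟨D, hD, hD0⟩ := hU
    exact ⟨D, hD0, hD ▸ dvd_zero G⟩

theorem exists_ne_zero_dvd_aeval_of_genericRank_le {ι κ μ R : Type*} [Fintype ι] [Fintype κ]
    [Finite μ] [CommRing R] [IsDomain R] [CharZero R] {F : μ → MvPolynomial ι R}
    (hF : genericRank F ≤ Fintype.card κ) {g : MvPolynomial μ R} (hg : aeval F g ≠ 0)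
    (s : κ → μ) : ∃ D : MvPolynomial κ R, D ≠ 0 ∧ aeval F g ∣ aeval (F ∘ s) D := by
  refine exists_ne_zero_dvd_aeval_of_not_algebraicIndependent hg fun h => ?_
  let G : Option κ → MvPolynomial μ R := fun o => o.elim g (X ∘ s)
  have hGF : (fun o : Option κ => o.elim (aeval F g) (F ∘ s)) = polyMap G F := by
    ext1 o
    cases o <;> simp [G, polyMap]
  have hrank : genericRank (polyMap G F) = Fintype.card (Option κ) :=
    genericRank_eq_card_of_algebraicIndependent (hGF ▸ h)
  have := genericRank_polyMap_le G F
  rw [hrank, Fintype.card_option] at this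
  lia

section PeriodicPoints

theorem exists_isIdempotentElem_pow {M : Type*} [Monoid M] [Finite M] (x : M) :
    ∃ k, 1 ≤ k ∧ IsIdempotentElem (x ^ k) := by
  obtain ⟨a, b, hab, hx⟩ := Set.finite_univ.exists_lt_map_eq_of_forall_mem
    (f := fun j : ℕ => x ^ j) fun _ => Set.mem_univ _
  obtain ⟨c, rfl⟩ := Nat.exists_eq_add_of_lt hab
  have hperiod (j : ℕ) : x ^ (a + (c + 1) * j) = x ^ a := by
    induction j with
    | zero => rfl
    | succ j ih => rw [Nat.mul_succ, ← add_assoc, pow_add, ih, ← pow_add, ← add_assoc, hx]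
  have hk : (c + 1) * (a + 1) = a + (c * (a + 1) + 1) := by ring
  refine ⟨(c + 1) * (a + 1), Nat.mul_pos c.succ_pos a.succ_pos, ?_⟩
  calc x ^ ((c + 1) * (a + 1)) * x ^ ((c + 1) * (a + 1))
      = x ^ (a + (c + 1) * (a + 1)) * x ^ (c * (a + 1) + 1) := by
        rw [← pow_add, ← pow_add]
        congr 1
        ring
    _ = x ^ ((c + 1) * (a + 1)) := by rw [hperiod, ← pow_add, ← hk]

theorem exists_forall_lt_map_castRingHom_ne_zero {ι : Type*} {P : MvPolynomial ι ℤ}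
    (hP : P ≠ 0) : ∃ N : ℕ, ∀ p > N, ∀ (k : Type) [CommRing k] [CharP k p],
      map (Int.castRingHom k) P ≠ 0 := by
  obtain ⟨v, hv⟩ := ne_zero_iff.1 hP
  refine ⟨(coeff v P).natAbs, fun p hp k _ _ h => ?_⟩
  have hdvd : (p : ℤ) ∣ coeff v P := by
    rw [← CharP.intCast_eq_zero_iff k p, ← eq_intCast (Int.castRingHom k), ← coeff_map, h,
      coeff_zero]
  exact hp.not_ge (Nat.le_of_dvd (Int.natAbs_pos.2 hv) (Int.natCast_dvd.1 hdvd))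

variable {ι : Type*} {f : ι → MvPolynomial ι ℤ} {D : MvPolynomial ι ℤ}

theorem exists_finite_field_polyMap_eq_pow [Fintype ι] (p : ℕ) [Fact p.Prime]
    (hD : map (Int.castRingHom (AlgebraicClosure (ZMod p)))
      (aeval (polyIter f (Fintype.card ι)) D) ≠ 0) :
    ∃ (F : Type) (_ : Field F) (_ : Finite F) (_ : CharP F p) (r : ℕ) (a : ι → F),
      (polyMap f a = fun i => a i ^ p ^ r) ∧ aeval a D ≠ 0 := by
  let k := AlgebraicClosure (ZMod p)
  let mapk : MvPolynomial ι ℤ →ₐ[ℤ] MvPolynomial ι k := (map (Int.castRingHom k)).toIntAlgHom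
  have hiter : mapk ∘ polyIter f (Fintype.card ι) =
      (polyMap f)^[Fintype.card ι] (X : ι → MvPolynomial ι k) :=
    (algHom_comp_polyMap_iterate f mapk _ X).trans
      (congrArg _ (_root_.funext fun i => map_X _ i))
  obtain ⟨r, b, hb, hbD⟩ := exists_polyMap_eq_pow_aeval_ne_zero (k := k) p (f := f) (D := D)
    (hiter ▸ fun h => hD ((comp_aeval_apply _ mapk D).trans h))
  let F := IntermediateField.adjoin (ZMod p) (Set.range b)
  have : FiniteDimensional (ZMod p) F :=
    IntermediateField.finiteDimensional_adjoin fun x _ => Algebra.IsIntegral.isIntegral x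
  let a : ι → F := fun i => ⟨b i, IntermediateField.subset_adjoin _ _ ⟨i, rfl⟩⟩
  let θ : F →ₐ[ℤ] k := (algebraMap F k).toIntAlgHom
  refine ⟨F, inferInstance, Module.finite_of_finite (ZMod p),
    charP_of_injective_algebraMap (algebraMap (ZMod p) F).injective p, r, a,
    _root_.funext fun i => Subtype.ext ?_, fun h => hbD ?_⟩
  · exact (congrFun (algHom_comp_polyMap f θ a) i).trans (congrFun hb i)
  · exact (comp_aeval_apply a θ D).symm.trans ((congrArg θ h).trans (map_zero θ))

variable {p r : ℕ} [Fact p.Prime] {F : Type*} [Field F] [CharP F p] {a : ι → F}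

theorem aeval_polyMap_iterate_ne_zero (ha : polyMap f a = fun i => a i ^ p ^ r)
    (hD : aeval a D ≠ 0) (n : ℕ) : aeval ((polyMap f)^[n] a) D ≠ 0 := by
  rw [polyMap_iterate_eq_pow p f ha, ← aeval_pow_char_pow]
  exact pow_ne_zero _ hD

theorem exists_isFixedPt_polyMap_iterate [Finite F] (ha : polyMap f a = fun i => a i ^ p ^ r) :
    ∃ e, 1 ≤ e ∧ Function.IsFixedPt (polyMap f)^[e] a := by
  have := Fintype.ofFinite F
  obtain ⟨e, -, he⟩ := FiniteField.card F p
  refine ⟨e, e.pos, (polyMap_iterate_eq_pow p f ha e).trans (_root_.funext fun i => ?_)⟩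
  rw [mul_comm, pow_mul, ← he, FiniteField.pow_card_pow]

theorem exists_isIdempotentElem_jacobian_polyIter [Fintype ι] [Finite F]
    (ha : polyMap f a = fun i => a i ^ p ^ r) :
    ∃ m, 1 ≤ m ∧ Function.IsFixedPt (polyMap f)^[m] a ∧
      IsIdempotentElem (jacobian (polyIter f m) a) := by
  classical
  obtain ⟨e, he, hea⟩ := exists_isFixedPt_polyMap_iterate ha
  obtain ⟨k, hk, hidem⟩ := exists_isIdempotentElem_pow (jacobian (polyIter f e) a)
  refine ⟨e * k, Nat.mul_pos he hk, ?_, ?_⟩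
  · rw [Function.iterate_mul]
    exact hea.iterate k
  · rwa [jacobian_polyIter_mul_of_isFixedPt f hea]

end PeriodicPoints

theorem exists_isFixedPt_isIdempotentElem_jacobian {ι : Type*} [Fintype ι]
    {f : ι → MvPolynomial ι ℤ} {D : MvPolynomial ι ℤ}
    (hD : aeval (polyIter f (Fintype.card ι)) D ≠ 0) :
    ∃ l N : ℕ, ∀ p : ℕ, p.Prime → N < p →
      ∃ (F : Type) (_ : Field F) (_ : Finite F) (_ : CharP F p) (a : ι → F) (m : ℕ), 1 ≤ m ∧
        Function.IsFixedPt (polyMap f)^[m] a ∧ aeval a D ≠ 0 ∧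
        IsIdempotentElem (jacobian (polyIter f m) a) ∧
        genericRank (polyIter f l) ≤ (jacobian (polyIter f m) a).rank := by
  set n := Fintype.card ι
  let l := Function.argmin fun j => genericRank (polyIter f j)
  have hmin : genericRank (polyIter f l) ≤
      genericRank (polyMap (polyIter f (l + 1)) (polyIter f n)) := by
    rw [← polyIter_add]
    exact Function.argmin_le (fun j => genericRank (polyIter f j)) _
  obtain ⟨r, c, hΔ⟩ := exists_minor_ne_zero_of_le_genericRank_polyMap hmin
  let Δ := ((jacobian (polyIter f (l + 1)) (X : ι → MvPolynomial ι ℤ)).submatrix r c).det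
  have hDΔ : aeval (polyIter f n) (D * Δ) ≠ 0 := by
    rw [map_mul]
    exact mul_ne_zero hD hΔ
  obtain ⟨N, hN⟩ := exists_forall_lt_map_castRingHom_ne_zero hDΔ
  refine ⟨l, N, fun p hp hNp => ?_⟩
  have := Fact.mk hp
  obtain ⟨F, _, hF, _, q, a, ha, haDΔ⟩ := exists_finite_field_polyMap_eq_pow p (hN p hNp _)
  obtain ⟨m, hm, hma, hidem⟩ := exists_isIdempotentElem_jacobian_polyIter ha
  have horbit (i : ℕ) := map_mul (aeval ((polyMap f)^[i] a)) D Δ ▸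
    aeval_polyMap_iterate_ne_zero ha haDΔ i
  refine ⟨F, _, hF, ‹_›, a, m, hm, hma, left_ne_zero_of_mul (horbit 0), hidem,
    le_rank_jacobian_polyIter (fun z => rank_jacobian_le_genericRank _ z) (fun i => ?_) m⟩
  refine (le_rank_iff_exists_det_submatrix_ne_zero _).2 ⟨r, c, ?_⟩
  rw [← aeval_det_submatrix_jacobian]
  exact right_ne_zero_of_mul (horbit i)

section Congruences

variable {ι κ R A : Type*} [CommRing R] [CommRing A] [Algebra R A] {J : Ideal A} {u v : ι → A}

theorem aeval_sModEq (h : ∀ i, u i ≡ v i [SMOD J]) (D : MvPolynomial ι R) :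
    aeval u D ≡ aeval v D [SMOD J] := by
  have hmk (w : ι → A) := comp_aeval_apply w (Ideal.Quotient.mkₐ R J) D
  rw [SModEq.idealQuotientMk]
  refine (hmk u).trans (Eq.trans ?_ (hmk v).symm)
  exact congrArg (fun w => aeval w D) (_root_.funext fun i => SModEq.idealQuotientMk.1 (h i))

theorem isFixedPt_polyMap_iterate_mk (f : ι → MvPolynomial ι R) {n : ℕ}
    (h : ∀ i, (polyMap f)^[n] u i ≡ u i [SMOD J]) :
    Function.IsFixedPt (polyMap f)^[n] (Ideal.Quotient.mk J ∘ u) :=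
  (algHom_comp_polyMap_iterate f (Ideal.Quotient.mkₐ R J) n u).symm.trans
    (_root_.funext fun i => SModEq.idealQuotientMk.1 (h i))

theorem aeval_comp_eq_zero_of_isFixedPt {f : ι → MvPolynomial ι R} {n l : ℕ} (hn : 1 ≤ n)
    (hu : Function.IsFixedPt (polyMap f)^[n] u) {g : MvPolynomial ι R} (hg : aeval u g = 0)
    {s : κ → ι} {D : MvPolynomial κ R}
    (hD : aeval (polyIter f l) g ∣ aeval (polyIter f l ∘ s) D) : aeval (u ∘ s) D = 0 := by
  obtain ⟨w, hw⟩ : ∃ w, aeval w ∘ polyIter f l = u := by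
    refine ⟨(polyMap f)^[n * l - l] u, (polyMap_polyIter f l _).trans ?_⟩
    rw [← Function.iterate_add_apply, Nat.add_sub_cancel' (Nat.le_mul_of_pos_left l hn),
      Function.iterate_mul]
    exact hu.iterate l
  have hdvd := map_dvd (aeval w) hD
  rw [comp_aeval_apply, comp_aeval_apply] at hdvd
  change aeval (aeval w ∘ polyIter f l) g ∣ aeval ((aeval w ∘ polyIter f l) ∘ s) D at hdvd
  rwa [hw, hg, zero_dvd_iff] at hdvd

end Congruences

section Lifting

theorem exists_mulVec_eq_of_linearIndependent_rows {K κ ι : Type*} [Field K] [Fintype ι]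
    [Finite κ] {E : Matrix ι ι K} {s : κ → ι} (hs : LinearIndependent K (E.submatrix s id).row)
    (b : κ → K) : ∃ w, ∀ j, E.mulVec w (s j) = b j := by
  have := Fintype.ofFinite κ
  have hrange : LinearMap.range (E.submatrix s id).mulVecLin = ⊤ := by
    apply Submodule.eq_top_of_finrank_eq
    rw [Module.finrank_fintype_fun_eq_card]
    exact hs.rank_matrix
  obtain ⟨w, hw⟩ := LinearMap.range_eq_top.1 hrange b
  exact ⟨w, fun j => congrFun hw j⟩

variable {ι κ R O F : Type*} [Fintype ι] [CommRing R] [CommRing O] [Algebra R O] [Field F]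
  [Algebra R F] {θ : O →ₐ[R] F} {ε : O}

theorem mul_sModEq_of_map_eq {x y : O} (h : θ x = θ y) :
    ε * x ≡ ε * y [SMOD Ideal.span {ε} * RingHom.ker θ] := by
  rw [SModEq.sub_mem, ← mul_sub]
  exact Ideal.mul_mem_mul (Ideal.mem_span_singleton_self ε) (RingHom.sub_mem_ker_iff θ |>.2 h)

variable {G : ι → MvPolynomial ι R} {y : ι → O}

theorem polyMap_iterate_add_mul_sModEq (hε : ε ∈ RingHom.ker θ)
    (hE : IsIdempotentElem (jacobian G (θ ∘ y))) {c z : ι → O} {w : ι → F}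
    (hc : ∀ i, polyMap G y i = y i + ε * c i)
    (hz : θ ∘ z = θ ∘ c + (jacobian G (θ ∘ y)).mulVec w) (j : ℕ) (i : ι) :
    (polyMap G)^[j] (fun i => y i + ε * z i) i ≡
      y i + ε * (z i + j * (jacobian G y).mulVec c i) [SMOD Ideal.span {ε} * RingHom.ker θ] := by
  set E := jacobian G (θ ∘ y)
  set J := jacobian G y
  have hJ (v : ι → O) : θ ∘ J.mulVec v = E.mulVec (θ ∘ v) := algHom_comp_jacobian_mulVec G θ y v
  have hEE (v : ι → F) : E.mulVec (E.mulVec v) = E.mulVec v := by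
    rw [Matrix.mulVec_mulVec, hE]
  induction j generalizing i with
  | zero => simp [SModEq.refl]
  | succ j ih =>
    set v : ι → O := fun i => z i + j * J.mulVec c i
    have hv : θ ∘ v = θ ∘ z + (j : F) • θ ∘ J.mulVec c := by
      ext i
      simp [v]
    have hstep : θ (c i + J.mulVec v i) = θ (z i + (j + 1 : ℕ) * J.mulVec c i) := by
      have hJv : θ (J.mulVec v i) = _ := congrFun (hJ v) i
      have hJc : θ (J.mulVec c i) = _ := congrFun (hJ c) i
      have hzi : θ (z i) = _ := congrFun hz i
      rw [map_add, map_add, map_mul, map_natCast, hJv, hJc, hv, hz, hJ, hzi]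
      simp only [Matrix.mulVec_add, Matrix.mulVec_smul, hEE, Pi.add_apply, Pi.smul_apply,
        Function.comp_apply, smul_eq_mul, Nat.cast_add, Nat.cast_one]
      ring
    have hsq : Ideal.span {ε ^ 2} ≤ Ideal.span {ε} * RingHom.ker θ := by
      rw [Ideal.span_singleton_le_iff_mem, pow_two]
      exact Ideal.mul_mem_mul (Ideal.mem_span_singleton_self ε) hε
    rw [Function.iterate_succ_apply']
    calc polyMap G ((polyMap G)^[j] fun i => y i + ε * z i) i
        ≡ polyMap G (fun i => y i + ε * v i) i [SMOD Ideal.span {ε} * RingHom.ker θ] :=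
          aeval_sModEq ih _
      _ ≡ polyMap G y i + ε * J.mulVec v i [SMOD Ideal.span {ε} * RingHom.ker θ] :=
          (polyMap_add_mul_sModEq G ε y v i).mono hsq
      _ = y i + ε * (c i + J.mulVec v i) := by rw [hc, mul_add, add_assoc]
      _ ≡ y i + ε * (z i + (j + 1 : ℕ) * J.mulVec c i) [SMOD Ideal.span {ε} * RingHom.ker θ] :=
          SModEq.rfl.add (mul_sModEq_of_map_eq hstep)

variable [Finite κ] {s : κ → ι} {t : κ → O}

/-- A Newton step: modulo `ε * ker θ` the corrected point `y'` is displaced by the same multiple of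
`ε` at each application of `polyMap G`, hence returns after `p` of them. -/
theorem exists_sModEq_span_singleton_mul_ker (p : ℕ) [CharP F p] (hθ : Function.Surjective θ)
    (hε : ε ∈ RingHom.ker θ) (hE : IsIdempotentElem (jacobian G (θ ∘ y)))
    (hs : LinearIndependent F ((jacobian G (θ ∘ y)).submatrix s id).row)
    (hy : ∀ i, polyMap G y i ≡ y i [SMOD Ideal.span {ε}])
    (ht : ∀ j, y (s j) ≡ t j [SMOD Ideal.span {ε}]) :
    ∃ y' : ι → O, θ ∘ y' = θ ∘ y ∧
      (∀ i, (polyMap G)^[p] y' i ≡ y' i [SMOD Ideal.span {ε} * RingHom.ker θ]) ∧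
      ∀ j, y' (s j) ≡ t j [SMOD Ideal.span {ε} * RingHom.ker θ] := by
  simp only [SModEq.sub_mem, Ideal.mem_span_singleton] at hy ht
  choose c hc using hy
  choose b hb using ht
  obtain ⟨w, hw⟩ := exists_mulVec_eq_of_linearIndependent_rows hs
    fun j => -θ (b j) - θ (c (s j))
  choose z hz using fun i => hθ (θ (c i) + (jacobian G (θ ∘ y)).mulVec w i)
  refine ⟨fun i => y i + ε * z i, _root_.funext fun i => ?_, fun i => ?_, fun j => ?_⟩
  · have hε0 : θ ε = 0 := hε
    simp [hε0]
  · have hiter := polyMap_iterate_add_mul_sModEq hε hE (fun i => sub_eq_iff_eq_add'.1 (hc i))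
      (_root_.funext hz) p i
    exact hiter.trans (SModEq.rfl.add (mul_sModEq_of_map_eq (by simp)))
  · have hbz : θ (b j + z (s j)) = θ 0 := by
      rw [map_add, hz, hw]
      simp
    rw [← sub_smodEq_zero, ← mul_zero ε, add_sub_right_comm, hb, ← mul_add]
    exact mul_sModEq_of_map_eq hbz

theorem exists_sModEq_pow_ker {p : ℕ} (hp : p.Prime) [CharP F p]
    (hθ : Function.Surjective θ) (hker : RingHom.ker θ = Ideal.span {(p : O)})
    {f : ι → MvPolynomial ι R} {a : ι → F} {m : ℕ}
    (hm : Function.IsFixedPt (polyMap f)^[m] a)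
    (hE : IsIdempotentElem (jacobian (polyIter f m) a))
    (hs : LinearIndependent F ((jacobian (polyIter f m) a).submatrix s id).row)
    (ht : ∀ j, θ (t j) = a (s j)) (n : ℕ) :
    ∃ y : ι → O, θ ∘ y = a ∧
      (∀ i, (polyMap f)^[m * p ^ n] y i ≡ y i [SMOD RingHom.ker θ ^ (n + 1)]) ∧
      ∀ j, y (s j) ≡ t j [SMOD RingHom.ker θ ^ (n + 1)] := by
  classical
  induction n with
  | zero =>
    choose y hy using fun i => hθ (a i)
    have hya : θ ∘ y = a := _root_.funext hy
    refine ⟨y, hya, fun i => ?_, fun j => ?_⟩ <;>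
      rw [zero_add, pow_one, SModEq.sub_mem, RingHom.sub_mem_ker_iff]
    · have hiter := congrFun (algHom_comp_polyMap_iterate f θ m y) i
      rw [hya, hm] at hiter
      rw [pow_zero, mul_one]
      exact hiter.trans (hy i).symm
    · exact (hy _).trans (ht j).symm
  | succ n ih =>
    obtain ⟨y, rfl, hy, hyt⟩ := ih
    have hpow : RingHom.ker θ ^ (n + 1) = Ideal.span {(p : O) ^ (n + 1)} := by
      rw [hker, Ideal.span_singleton_pow]
    have hE' : jacobian (polyIter f (m * p ^ n)) (θ ∘ y) = jacobian (polyIter f m) (θ ∘ y) := by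
      rw [jacobian_polyIter_mul_of_isFixedPt f hm]
      exact hE.pow_eq (pow_ne_zero _ hp.ne_zero)
    have hiter : polyMap (A := O) (polyIter f (m * p ^ n)) = (polyMap f)^[m * p ^ n] :=
      _root_.funext fun _ => polyMap_polyIter f _ _
    simp only [← polyMap_polyIter f (m * p ^ n), hpow] at hy hyt
    rw [pow_succ _ (n + 1), hpow, pow_succ p n, ← mul_assoc, Function.iterate_mul, ← hiter]
    refine exists_sModEq_span_singleton_mul_ker p hθ ?_ (hE' ▸ hE) (hE' ▸ hs) hy hyt
    rw [hker]
    exact Ideal.mem_span_singleton.2 (dvd_pow_self _ n.succ_ne_zero)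

theorem exists_isFixedPt_mk_aeval_ne_zero [IsDomain R] [CharZero R] [IsDomain O] [CharZero O]
    [FaithfulSMul R O] {p : ℕ} (hp : p.Prime) [CharP F p] [IsHausdorff (RingHom.ker θ) O]
    (hθ : Function.Surjective θ) (hker : RingHom.ker θ = Ideal.span {(p : O)})
    {f : ι → MvPolynomial ι R} {a : ι → F} {m l : ℕ} (hm1 : 1 ≤ m)
    (hm : Function.IsFixedPt (polyMap f)^[m] a)
    (hE : IsIdempotentElem (jacobian (polyIter f m) a))
    (hl : genericRank (polyIter f l) ≤ (jacobian (polyIter f m) a).rank)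
    {g : MvPolynomial ι R} (hg : aeval (polyIter f l) g ≠ 0) :
    ∃ (n : ℕ) (y : ι → O), θ ∘ y = a ∧
      Function.IsFixedPt (polyMap f)^[m * p ^ n]
        (Ideal.Quotient.mk (RingHom.ker θ ^ (n + 1)) ∘ y) ∧
      aeval (Ideal.Quotient.mk (RingHom.ker θ ^ (n + 1)) ∘ y) g ≠ 0 := by
  by_contra! hcon
  obtain ⟨s, hs⟩ := exists_linearIndependent_rows_of_le_rank _ hl
  obtain ⟨D, hD0, hD⟩ := exists_ne_zero_dvd_aeval_of_genericRank_le
    (κ := Fin (genericRank (polyIter f l))) (by simp) hg s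
  have hvanish (t : Fin (genericRank (polyIter f l)) → O) (ht : ∀ j, θ (t j) = a (s j)) :
      aeval t D = 0 := by
    refine IsHausdorff.haus ‹IsHausdorff (RingHom.ker θ) O› _ fun n => ?_
    obtain ⟨y, hya, hy, hyt⟩ := exists_sModEq_pow_ker hp hθ hker hm hE hs ht n
    have hfix := isFixedPt_polyMap_iterate_mk f hy
    have hys := aeval_comp_eq_zero_of_isFixedPt (Nat.mul_pos hm1 (pow_pos hp.pos n)) hfix
      (hcon n y hya hfix) hD
    have htD : aeval t D ∈ RingHom.ker θ ^ (n + 1) := by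
      rw [← SModEq.zero]
      refine (aeval_sModEq (fun j => (hyt j).symm) D).trans (SModEq.idealQuotientMk.2 ?_)
      exact (comp_aeval_apply (y ∘ s) (Ideal.Quotient.mkₐ R _) D).trans
        (hys.trans (map_zero _).symm)
    rw [smul_eq_mul, Ideal.mul_top, SModEq.zero]
    exact Ideal.pow_le_pow_right n.le_succ htD
  have hfibre (x : F) : {t : O | θ t = x}.Infinite := by
    obtain ⟨t, rfl⟩ := hθ x
    refine (Set.infinite_range_of_injective (f := fun u : O => t + p * u) fun u v huv =>
      mul_left_cancel₀ (Nat.cast_ne_zero.2 hp.ne_zero) (add_left_cancel huv)).mono ?_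
    rintro _ ⟨u, rfl⟩
    simp
  refine hD0 (map_injective _ (FaithfulSMul.algebraMap_injective R O) ?_)
  refine funext_set (fun j => {t : O | θ t = a (s j)}) (fun j => hfibre _) fun t ht => ?_
  rw [map_zero, map_zero, eval_map, ← hvanish t fun j => ht j trivial]
  rfl

end Lifting

section Witt

theorem charZero_wittVector (p : ℕ) [Fact p.Prime] (F : Type*) [Field F] [CharP F p] :
    CharZero (WittVector p F) := by
  obtain ⟨c, hc⟩ := CharP.exists (WittVector p F)
  rcases CharP.char_is_prime_or_zero (WittVector p F) c with hprime | rfl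
  · have hcF : (c : F) = 0 := by
      rw [← map_natCast (WittVector.constantCoeff (p := p)), CharP.cast_eq_zero, map_zero]
    rw [CharP.cast_eq_zero_iff F p, Nat.prime_dvd_prime_iff_eq Fact.out hprime] at hcF
    subst hcF
    exact absurd (CharP.cast_eq_zero (WittVector p F) p) (WittVector.p_nonzero p F)
  · exact CharP.charP_to_charZero _

theorem exists_isFixedPt_lift_aeval_ne_zero {ι : Type*} [Fintype ι] {p : ℕ}
    (hp : p.Prime) {F : Type} [Field F] [Finite F] [CharP F p] {f : ι → MvPolynomial ι ℤ}
    {a : ι → F} {m l : ℕ} (hm1 : 1 ≤ m) (hm : Function.IsFixedPt (polyMap f)^[m] a)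
    (hE : IsIdempotentElem (jacobian (polyIter f m) a))
    (hl : genericRank (polyIter f l) ≤ (jacobian (polyIter f m) a).rank)
    {g : MvPolynomial ι ℤ} (hg : aeval (polyIter f l) g ≠ 0) :
    ∃ (n : ℕ) (R : Type) (_ : CommRing R) (_ : Finite R) (_ : IsLocalRing R) (π : R →ₐ[ℤ] F)
      (y : ι → R), Function.Surjective π ∧ RingHom.ker π = Ideal.span {(p : R)} ∧
        (p : R) ^ (n + 1) = 0 ∧ π ∘ y = a ∧ Function.IsFixedPt (polyMap f)^[m * p ^ n] y ∧
        aeval y g ≠ 0 := by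
  have : Fact p.Prime := ⟨hp⟩
  have := charZero_wittVector p F
  set θ : WittVector p F →ₐ[ℤ] F := WittVector.constantCoeff.toIntAlgHom
  have hθ : Function.Surjective θ := WittVector.constantCoeff_surjective p
  have hker : RingHom.ker θ = Ideal.span {(p : WittVector p F)} := WittVector.ker_constantCoeff
  have : IsHausdorff (RingHom.ker θ) (WittVector p F) := hker ▸ inferInstance
  obtain ⟨n, y, hya, hy, hyg⟩ := exists_isFixedPt_mk_aeval_ne_zero hp hθ hker hm1 hm hE hl hg
  set I := RingHom.ker θ ^ (n + 1)
  have hI : I ≤ RingHom.ker θ := Ideal.pow_le_self n.succ_ne_zero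
  have : Finite (WittVector p F ⧸ RingHom.ker θ) :=
    Finite.of_equiv F (Ideal.quotientKerAlgEquivOfSurjective hθ).symm.toEquiv
  have hfinite : Finite (WittVector p F ⧸ I) :=
    Ideal.finite_quotient_pow (hker ▸ Submodule.fg_span_singleton _) _
  have := nontrivial_of_ne _ _ hyg
  refine ⟨n, WittVector p F ⧸ I, inferInstance, hfinite,
    .of_surjective' _ Ideal.Quotient.mk_surjective, Ideal.Quotient.liftₐ I θ hI,
    Ideal.Quotient.mk I ∘ y, Ideal.Quotient.lift_surjective_of_surjective _ _ hθ, ?_, ?_, hya,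
    hy, hyg⟩
  · refine (Ideal.ker_quotient_lift (θ : WittVector p F →+* F) hI).trans ?_
    refine (congrArg (Ideal.map _) hker).trans ?_
    rw [Ideal.map_span, Set.image_singleton, map_natCast]
  · rw [← map_natCast (Ideal.Quotient.mk I), ← map_pow, Ideal.Quotient.eq_zero_iff_mem]
    exact Ideal.pow_mem_pow (hker ▸ Ideal.mem_span_singleton_self _) _

end Witt

end PolynomialDynamics

section WordMaps

open MvPolynomial
open scoped MatrixGroups

section Matrices

variable {α n A : Type*} [CommRing A]

/-- The tuple of matrices with entries `z`. -/
def matrices (z : α × n × n → A) (i : α) : Matrix n n A :=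
  Matrix.of fun a b => z (i, a, b)

theorem map_matrices_X (z : α × n × n → A) (i : α) :
    (matrices (X : α × n × n → MvPolynomial (α × n × n) ℤ) i).map (aeval z) = matrices z i :=
  Matrix.ext fun a b => aeval_X z (i, a, b)

end Matrices

section Words

variable {α n A B : Type*} [Fintype n] [DecidableEq n] [CommRing A] [CommRing B]

/-- The value of a word in the letters `(i, true)` for `xᵢ` and `(i, false)` for `xᵢ⁻¹` at a tuple
of matrices. Inverses are replaced by adjugates, so that the entries are polynomials in those of
the tuple; up to scalars this makes no difference. -/
def wordMatrix (M : α → Matrix n n A) (w : List (α × Bool)) : Matrix n n A :=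
  (w.map fun l => bif l.2 then M l.1 else (M l.1).adjugate).prod

theorem map_wordMatrix (θ : A →+* B) (M : α → Matrix n n A) (w : List (α × Bool)) :
    (wordMatrix M w).map θ = wordMatrix (fun i => (M i).map θ) w := by
  rw [← RingHom.mapMatrix_apply, wordMatrix, map_list_prod, List.map_map, wordMatrix]
  refine congrArg List.prod (List.map_congr_left fun l _ => ?_)
  cases hl : l.2
  · simpa [hl] using RingHom.map_adjugate θ (M l.1)
  · simp [hl]

theorem aeval_wordMatrix (z : α × n × n → A) (w : List (α × Bool)) :
    (wordMatrix (matrices (X : α × n × n → MvPolynomial (α × n × n) ℤ)) w).map (aeval z) =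
      wordMatrix (matrices z) w := by
  refine (map_wordMatrix (aeval z : MvPolynomial (α × n × n) ℤ →ₐ[ℤ] A).toRingHom _ w).trans ?_
  exact congrArg (wordMatrix · w) (_root_.funext (map_matrices_X z))

/-- The representation of the free group in the projective linear group with generators `U`. -/
def projRep (U : α → GL n A) : FreeGroup α →* PGL(n, A) :=
  Matrix.ProjGenLinGroup.mk.comp (FreeGroup.lift U)

theorem coe_scalar_det_mul_inv (u : GL n A) :
    ((.scalar n u.det * u⁻¹ : GL n A) : Matrix n n A) = (u : Matrix n n A).adjugate := by
  rw [Units.val_mul, Units.mul_inv_eq_iff_eq_mul, Matrix.adjugate_mul]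
  exact (Matrix.smul_one_eq_diagonal _).symm

theorem exists_coe_eq_wordMatrix (U : α → GL n A) (w : List (α × Bool)) :
    ∃ u : GL n A, (u : Matrix n n A) = wordMatrix (fun i => (U i : Matrix n n A)) w ∧
      Matrix.ProjGenLinGroup.mk u = projRep U (FreeGroup.mk w) := by
  refine ⟨(w.map fun l => bif l.2 then U l.1 else .scalar n (U l.1).det * (U l.1)⁻¹).prod, ?_, ?_⟩
  · rw [← Units.coeHom_apply, map_list_prod, List.map_map, wordMatrix]
    refine congrArg List.prod (List.map_congr_left fun l _ => ?_)
    cases hl : l.2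
    · simpa [hl] using coe_scalar_det_mul_inv (U l.1)
    · simp [hl]
  · rw [projRep, MonoidHom.comp_apply, FreeGroup.lift_mk, map_list_prod, map_list_prod,
      List.map_map, List.map_map]
    refine congrArg List.prod (List.map_congr_left fun l _ => ?_)
    cases hl : l.2 <;> simp [hl]

variable [DecidableEq α]

theorem projRep_eq_one_iff (U : α → GL n A) (W : FreeGroup α) :
    projRep U W = 1 ↔ wordMatrix (fun i => (U i : Matrix n n A)) W.toWord ∈
      Set.range (Matrix.scalar n) := by
  obtain ⟨u, hu, hmk⟩ := exists_coe_eq_wordMatrix U W.toWord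
  rw [FreeGroup.mk_toWord] at hmk
  rw [← hu, ← hmk, Matrix.ProjGenLinGroup.mk_eq_one,
    Matrix.GeneralLinearGroup.mem_center_iff_val_mem_range_scalar]

/-- The entries of the values of the words `φ xᵢ` at a tuple of generic matrices. -/
noncomputable def wordPolynomials (n : Type*) [Fintype n] [DecidableEq n]
    (φ : FreeGroup α →* FreeGroup α) : α × n × n → MvPolynomial (α × n × n) ℤ :=
  fun q => wordMatrix (matrices X) (φ (.of q.1)).toWord q.2.1 q.2.2

theorem matrices_polyMap_wordPolynomials (φ : FreeGroup α →* FreeGroup α) (z : α × n × n → A)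
    (i : α) : matrices (polyMap (wordPolynomials n φ) z) i =
      wordMatrix (matrices z) (φ (.of i)).toWord := by
  rw [← aeval_wordMatrix]
  rfl

/-- Polynomials cutting out the locus where the word `W` takes a scalar value. -/
noncomputable def scalarObstruction (W : FreeGroup α) (q : (n × n) × n × n) :
    MvPolynomial (α × n × n) ℤ :=
  (Matrix.single q.1.1 q.1.2 1 * wordMatrix (matrices X) W.toWord -
    wordMatrix (matrices X) W.toWord * Matrix.single q.1.1 q.1.2 1 : Matrix n n _) q.2.1 q.2.2

variable {z : α × n × n → A} {U : α → GL n A}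

theorem projRep_eq_one_iff_aeval (hU : ∀ i, (U i : Matrix n n A) = matrices z i)
    (W : FreeGroup α) :
    projRep U W = 1 ↔ ∀ q, aeval z (scalarObstruction W q) = 0 := by
  have haeval (q : (n × n) × n × n) : aeval z (scalarObstruction W q) =
      (Matrix.single q.1.1 q.1.2 1 * wordMatrix (matrices z) W.toWord - wordMatrix (matrices z)
        W.toWord * Matrix.single q.1.1 q.1.2 1 : Matrix n n A) q.2.1 q.2.2 := by
    rw [← aeval_wordMatrix z, ← map_one (aeval z : MvPolynomial (α × n × n) ℤ →ₐ[ℤ] A),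
      ← Matrix.map_single, ← Matrix.map_mul, ← Matrix.map_mul, scalarObstruction, Matrix.sub_apply,
      map_sub, Matrix.sub_apply, Matrix.map_apply, Matrix.map_apply]
  rw [projRep_eq_one_iff, _root_.funext hU, Matrix.mem_range_scalar_iff_commute_single']
  simp only [haeval, Prod.forall, Commute, SemiconjBy, ← sub_eq_zero (b := wordMatrix _ _ * _),
    ← Matrix.ext_iff, Matrix.zero_apply]

theorem exists_projRep_eq_comp (hU : ∀ i, (U i : Matrix n n A) = matrices z i)
    (φ : FreeGroup α →* FreeGroup α) :
    ∃ U' : α → GL n A,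
      (∀ i, (U' i : Matrix n n A) = matrices (polyMap (wordPolynomials n φ) z) i) ∧
      projRep U' = (projRep U).comp φ := by
  choose U' hU' hmk using fun i => exists_coe_eq_wordMatrix U (φ (.of i)).toWord
  refine ⟨U', fun i => ?_, FreeGroup.ext_hom _ _ fun i => ?_⟩
  · rw [hU', matrices_polyMap_wordPolynomials, _root_.funext hU]
  · rw [MonoidHom.comp_apply, ← FreeGroup.mk_toWord (x := φ (.of i)), ← hmk]
    simp [projRep]

theorem exists_projRep_eq_iterate (hU : ∀ i, (U i : Matrix n n A) = matrices z i)
    (φ : FreeGroup α →* FreeGroup α) (j : ℕ) :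
    ∃ U' : α → GL n A,
      (∀ i, (U' i : Matrix n n A) = matrices ((polyMap (wordPolynomials n φ))^[j] z) i) ∧
      ∀ W, projRep U' W = projRep U (φ^[j] W) := by
  induction j with
  | zero => exact ⟨U, hU, fun _ => rfl⟩
  | succ j ih =>
    obtain ⟨U', hU', hrep⟩ := ih
    obtain ⟨U'', hU'', hrep'⟩ := exists_projRep_eq_comp hU' φ
    refine ⟨U'', fun i => (hU'' i).trans ?_, fun W => ?_⟩
    · rw [Function.iterate_succ_apply']
    · rw [hrep', MonoidHom.comp_apply, hrep, Function.iterate_succ_apply]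

theorem projRep_iterate_of_isFixedPt (hU : ∀ i, (U i : Matrix n n A) = matrices z i)
    {φ : FreeGroup α →* FreeGroup α} {j : ℕ}
    (hz : Function.IsFixedPt (polyMap (wordPolynomials n φ))^[j] z) (W : FreeGroup α) :
    projRep U (φ^[j] W) = projRep U W := by
  obtain ⟨U', hU', hrep⟩ := exists_projRep_eq_iterate hU φ j
  rw [← hrep, _root_.funext fun i => Units.ext ((hU' i).trans (hz.symm ▸ (hU i).symm))]

end Words

end WordMaps

section Schottky

open scoped Matrix MatrixGroups Polynomial

variable {α : Type*}

/-- The rank one matrix with image `![1, x l]` and kernel `![1, x l⁻¹]`, where `l⁻¹ = (l.1, !l.2)`.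
It is the leading coefficient of a pencil of hyperbolic matrices with these fixed points. The sign
makes inversion of letters correspond to adjugation. -/
def letterMatrix (x : α × Bool → ℤ) (l : α × Bool) : Matrix (Fin 2) (Fin 2) ℤ :=
  (bif l.2 then 1 else -1 : ℤ) • !![-x (l.1, !l.2), 1; -x l * x (l.1, !l.2), x l]

theorem adjugate_letterMatrix (x : α × Bool → ℤ) (l : α × Bool) :
    (letterMatrix x l).adjugate = letterMatrix x (l.1, !l.2) := by
  obtain ⟨i, _ | _⟩ := l <;> simp [letterMatrix, Matrix.adjugate_fin_two, mul_comm]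

theorem letterMatrix_mulVec (x : α × Bool → ℤ) (l : α × Bool) (v : Fin 2 → ℤ) :
    letterMatrix x l *ᵥ v =
      ((bif l.2 then 1 else -1) * (v 1 - x (l.1, !l.2) * v 0)) • ![1, x l] := by
  ext i
  fin_cases i <;> simp [letterMatrix, Matrix.mulVec, dotProduct, Fin.sum_univ_two] <;> ring

theorem exists_prod_letterMatrix_mulVec_eq {x : α × Bool → ℤ} (hx : Function.Injective x)
    {l : α × Bool} {w : List (α × Bool)} (hw : FreeGroup.IsReduced (l :: w)) :
    ∃ c : ℤ, c ≠ 0 ∧ ((l :: w).map (letterMatrix x)).prod *ᵥ ![0, 1] = c • ![1, x l] := by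
  have hsign (l : α × Bool) : (bif l.2 then 1 else -1 : ℤ) ≠ 0 := by cases l.2 <;> simp
  induction w generalizing l with
  | nil =>
    refine ⟨bif l.2 then 1 else -1, hsign l, ?_⟩
    rw [List.map_singleton, List.prod_singleton, letterMatrix_mulVec]
    simp
  | cons l₂ w ih =>
    obtain ⟨hl, hw⟩ := List.isChain_cons_cons.1 hw
    obtain ⟨c, hc, hprod⟩ := ih hw
    have hinv : l₂ ≠ (l.1, !l.2) := by
      rintro rfl
      simp at hl
    have hne : x l₂ - x (l.1, !l.2) ≠ 0 := sub_ne_zero.2 (hx.ne hinv)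
    refine ⟨(bif l.2 then 1 else -1) * (c * (x l₂ - x (l.1, !l.2))),
      mul_ne_zero (hsign l) (mul_ne_zero hc hne), ?_⟩
    rw [List.map_cons, List.prod_cons, ← Matrix.mulVec_mulVec, hprod, letterMatrix_mulVec]
    congr 2
    simp only [Pi.smul_apply, smul_eq_mul, Matrix.cons_val_zero, Matrix.cons_val_one]
    ring

theorem prod_letterMatrix_ne_zero {x : α × Bool → ℤ} (hx : Function.Injective x)
    {w : List (α × Bool)} (hw : FreeGroup.IsReduced w) (hne : w ≠ []) :
    (w.map (letterMatrix x)).prod 0 1 ≠ 0 := by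
  obtain ⟨l, w, rfl⟩ := List.exists_cons_of_ne_nil hne
  obtain ⟨c, hc, hprod⟩ := exists_prod_letterMatrix_mulVec_eq hx hw
  have hentry : ((l :: w).map (letterMatrix x)).prod 0 1 = c := by
    simpa [Matrix.mulVec_eq_sum, -List.map_cons, -List.prod_cons] using congrFun hprod 0
  exact hentry.trans_ne hc

/-- A pencil of hyperbolic matrices with attracting point `x l` and repelling point `x l⁻¹`. -/
noncomputable def letterPencil (x : α × Bool → ℤ) (l : α × Bool) : Matrix (Fin 2) (Fin 2) ℤ[X] :=
  (Polynomial.X : ℤ[X]) • (letterMatrix x l).map Polynomial.C +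
    (letterMatrix x (l.1, !l.2)).map Polynomial.C

theorem adjugate_letterPencil (x : α × Bool → ℤ) (l : α × Bool) :
    (letterPencil x l).adjugate = letterPencil x (l.1, !l.2) := by
  simp only [letterPencil, ← adjugate_letterMatrix, Bool.not_not]
  ext a b
  fin_cases a <;> fin_cases b <;> simp [Matrix.adjugate_fin_two, add_comm]

theorem wordMatrix_letterPencil (x : α × Bool → ℤ) (w : List (α × Bool)) :
    wordMatrix (fun i => letterPencil x (i, true)) w = (w.map (letterPencil x)).prod := by
  refine congrArg List.prod (List.map_congr_left fun l _ => ?_)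
  obtain ⟨i, _ | _⟩ := l
  · exact adjugate_letterPencil x (i, true)
  · rfl

theorem det_letterPencil (x : α × Bool → ℤ) (l : α × Bool) :
    (letterPencil x l).det = Polynomial.C ((x l - x (l.1, !l.2)) ^ 2) * Polynomial.X := by
  obtain ⟨i, _ | _⟩ := l <;>
    simp [letterPencil, letterMatrix, Matrix.det_fin_two] <;> ring

theorem coeff_prod_letterPencil (x : α × Bool → ℤ) (w : List (α × Bool)) (a b : Fin 2) :
    ((w.map (letterPencil x)).prod a b).coeff w.length = (w.map (letterMatrix x)).prod a b := by
  have hpencil (l : α × Bool) : matPolyEquiv (letterPencil x l) =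
      Polynomial.C (letterMatrix x l) * Polynomial.X +
        Polynomial.C (letterMatrix x (l.1, !l.2)) := by
    rw [letterPencil, map_add, matPolyEquiv_map_smul, matPolyEquiv_map_C, matPolyEquiv_map_C,
      Polynomial.map_X, Polynomial.X_mul_C]
  have hlead := Polynomial.coeff_list_prod_of_natDegree_le
    (w.map fun l => matPolyEquiv (letterPencil x l)) 1
    (List.forall_mem_map.2 fun l _ => hpencil l ▸ Polynomial.natDegree_linear_le)
  simp only [List.length_map, mul_one, List.map_map, Function.comp_def, hpencil] at hlead
  rw [← matPolyEquiv_coeff_apply, map_list_prod, List.map_map]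
  simp [Function.comp_def, hpencil, hlead]

/-- The ping-pong lemma for the tuple of hyperbolic matrices `letterPencil x (i, true)`, read off
from leading coefficients. -/
theorem exists_projRep_injective (α : Type*) [Countable α] :
    ∃ U : α → GL (Fin 2) (FractionRing ℤ[X]), Function.Injective (projRep U) := by
  classical
  obtain ⟨x', hx'⟩ := exists_injective_nat (α × Bool)
  set x : α × Bool → ℤ := fun l => x' l
  have hx : Function.Injective x := Nat.cast_injective.comp hx'
  set ρ := algebraMap ℤ[X] (FractionRing ℤ[X])
  have hρ : Function.Injective ρ := IsFractionRing.injective _ _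
  have hdet (i : α) : ((letterPencil x (i, true)).map ρ).det ≠ 0 := by
    have hne : x (i, true) - x (i, false) ≠ 0 := sub_ne_zero.2 (hx.ne (by simp))
    rw [← RingHom.mapMatrix_apply, ← RingHom.map_det, det_letterPencil, map_ne_zero_iff ρ hρ]
    exact mul_ne_zero (Polynomial.C_ne_zero.2 (pow_ne_zero 2 hne)) Polynomial.X_ne_zero
  refine ⟨fun i => .mkOfDetNeZero _ (hdet i), (injective_iff_map_eq_one _).2 fun W hW => ?_⟩
  obtain ⟨c, hc⟩ := (projRep_eq_one_iff _ W).1 hW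
  have hentry : ρ (wordMatrix (fun i => letterPencil x (i, true)) W.toWord 0 1) = 0 := by
    rw [← Matrix.map_apply (f := ρ), map_wordMatrix]
    exact (congrFun (congrFun hc 0) 1).symm.trans (by simp)
  rw [map_eq_zero_iff ρ hρ, wordMatrix_letterPencil] at hentry
  by_contra hW1
  refine prod_letterMatrix_ne_zero hx FreeGroup.isReduced_toWord
    (mt FreeGroup.toWord_eq_nil_iff.1 hW1) ?_
  rw [← coeff_prod_letterPencil, hentry, Polynomial.coeff_zero]

end Schottky

section FiniteQuotients

open MvPolynomial
open scoped MatrixGroups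

section PrincipalCongruence

variable {n R F : Type*} [Fintype n] [DecidableEq n] [CommRing R] [CommRing F]

theorem pow_mem_range_scalar_of_map_mem_range_scalar {p N : ℕ} {π : R →+* F}
    (hπ : Function.Surjective π) (hker : RingHom.ker π = Ideal.span {(p : R)})
    (hp : (p : R) ^ (N + 1) = 0) {M : Matrix n n R}
    (hM : M.map π ∈ Set.range (Matrix.scalar n)) :
    M ^ p ^ N ∈ Set.range (Matrix.scalar n) := by
  obtain ⟨c', hc'⟩ := hM
  obtain ⟨c, rfl⟩ := hπ c'
  have hdvd (i j : n) : (p : R) ∣ (M - Matrix.scalar n c) i j := by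
    rw [← Ideal.mem_span_singleton, ← hker, RingHom.mem_ker, Matrix.sub_apply, map_sub,
      ← Matrix.map_apply (f := π), ← hc', Matrix.scalar_apply, Matrix.scalar_apply,
      Matrix.diagonal_apply, Matrix.diagonal_apply, apply_ite π, map_zero, sub_self]
  choose E hE using hdvd
  let q : Polynomial R := Polynomial.C c + (p : Polynomial R) * Polynomial.X
  have hq : Polynomial.aeval (Matrix.of E) q = M := by
    ext i j
    have hij := hE i j
    rw [Matrix.sub_apply, sub_eq_iff_eq_add'] at hij
    simp [q, hij, Matrix.algebraMap_matrix_apply, Matrix.diagonal_apply, ← Matrix.diagonal_natCast]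
  have hpow : q ^ p ^ N = Polynomial.C (c ^ p ^ N) := by
    have h := dvd_sub_pow_of_dvd_sub (p := p) (a := q) (b := Polynomial.C c)
      ⟨Polynomial.X, add_sub_cancel_left _ _⟩ N
    rwa [← Polynomial.C_eq_natCast, ← Polynomial.C_pow, hp, Polynomial.C_0, zero_dvd_iff,
      sub_eq_zero, ← Polynomial.C_pow] at h
  refine ⟨c ^ p ^ N, ?_⟩
  rw [← hq, ← map_pow, hpow, Polynomial.aeval_C]
  rfl

theorem pow_eq_one_of_projGenLinGroup_map_eq_one {p N : ℕ} {π : R →+* F}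
    (hπ : Function.Surjective π) (hker : RingHom.ker π = Ideal.span {(p : R)})
    (hp : (p : R) ^ (N + 1) = 0) {g : PGL(n, R)} (hg : Matrix.ProjGenLinGroup.map π g = 1) :
    g ^ p ^ N = 1 := by
  obtain ⟨u, rfl⟩ := Matrix.ProjGenLinGroup.mk_surjective g
  rw [Matrix.ProjGenLinGroup.map_mk, Matrix.ProjGenLinGroup.mk_eq_one,
    Matrix.GeneralLinearGroup.mem_center_iff_val_mem_range_scalar] at hg
  rw [← map_pow, Matrix.ProjGenLinGroup.mk_eq_one,
    Matrix.GeneralLinearGroup.mem_center_iff_val_mem_range_scalar, Units.val_pow_eq_pow_val]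
  exact pow_mem_range_scalar_of_map_mem_range_scalar hπ hker hp hg

end PrincipalCongruence

section Units

variable {α n A B : Type*} [Fintype n] [DecidableEq n] [CommRing A] [CommRing B]

theorem map_projRep (π : A →+* B) (U : α → GL n A) (W : FreeGroup α) :
    Matrix.ProjGenLinGroup.map π (projRep U W) =
      projRep (fun i => Matrix.GeneralLinearGroup.map π (U i)) W := by
  refine DFunLike.congr_fun (f := (Matrix.ProjGenLinGroup.map π).comp (projRep U))
    (FreeGroup.ext_hom _ _ fun i => ?_) W
  simp [projRep]

/-- The product of the determinants of a tuple of generic matrices. -/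
noncomputable def detProduct (α n : Type*) [Fintype α] [Fintype n] [DecidableEq n] :
    MvPolynomial (α × n × n) ℤ :=
  ∏ i, (matrices X i).det

theorem isUnit_aeval_detProduct_iff [Fintype α] {z : α × n × n → A} :
    IsUnit (aeval z (detProduct α n)) ↔
      ∃ U : α → GL n A, ∀ i, (U i : Matrix n n A) = matrices z i := by
  have haeval : aeval z (detProduct α n) = ∏ i, (matrices z i).det := by
    simp only [detProduct, map_prod, AlgHom.map_det, AlgHom.mapMatrix_apply, map_matrices_X]
  simp only [haeval, IsUnit.prod_univ_iff, ← Matrix.isUnit_iff_isUnit_det]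
  exact Classical.skolem (p := fun i (u : GL n A) => (u : Matrix n n A) = matrices z i)

theorem exists_map_eq_of_isLocalHom {π : A →+* B} (hπ : IsLocalHom π) {z : α × n × n → A}
    {U : α → GL n B} (hU : ∀ i, (U i : Matrix n n B) = matrices (π ∘ z) i) :
    ∃ U' : α → GL n A, (∀ i, (U' i : Matrix n n A) = matrices z i) ∧
      ∀ i, Matrix.GeneralLinearGroup.map π (U' i) = U i := by
  have hunit (i : α) : IsUnit (matrices z i) := by
    rw [Matrix.isUnit_iff_isUnit_det, ← isUnit_map_iff π, RingHom.map_det,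
      ← Matrix.isUnit_iff_isUnit_det]
    exact ⟨U i, hU i⟩
  choose U' hU' using hunit
  refine ⟨U', hU', fun i => Units.ext ?_⟩
  rw [hU]
  exact congrArg (Matrix.map · π) (hU' i)

theorem finite_projGenLinGroup [Finite A] : Finite PGL(n, A) :=
  .of_surjective _ Matrix.ProjGenLinGroup.mk_surjective

end Units

section Separation

variable {α : Type*} {φ : FreeGroup α →* FreeGroup α}

section Generic

variable [DecidableEq α]

theorem exists_generic_matrices [Countable α] (hφ : Function.Injective φ) (l : ℕ) :
    ∃ (K : Type) (_ : Field K) (z : α × Fin 2 × Fin 2 → K) (U : α → GL (Fin 2) K),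
      (∀ i, (U i : Matrix _ _ K) =
        matrices (polyMap (polyIter (wordPolynomials (Fin 2) φ) l) z) i) ∧
      Function.Injective (projRep U) := by
  obtain ⟨U, hU⟩ := exists_projRep_injective α
  obtain ⟨U', hU', hrep⟩ := exists_projRep_eq_iterate (U := U)
    (z := fun q => (U q.1 : Matrix _ _ _) q.2.1 q.2.2) (fun _ => rfl) φ l
  simp only [← polyMap_polyIter] at hU'
  refine ⟨_, inferInstance, _, U', hU', fun V W h => hφ.iterate l (hU ?_)⟩
  rw [← hrep, ← hrep, h]

theorem aeval_polyIter_detProduct_ne_zero [Fintype α] (hφ : Function.Injective φ) (l : ℕ) :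
    aeval (polyIter (wordPolynomials (Fin 2) φ) l) (detProduct α (Fin 2)) ≠ 0 := by
  obtain ⟨K, _, z, U, hU, -⟩ := exists_generic_matrices hφ l
  have hunit := isUnit_aeval_detProduct_iff.2 ⟨U, hU⟩
  rw [aeval_polyMap] at hunit
  exact fun h => hunit.ne_zero (by rw [h, map_zero])

theorem exists_aeval_polyIter_scalarObstruction_ne_zero [Countable α] (hφ : Function.Injective φ)
    (l : ℕ) {W : FreeGroup α} (hW : W ≠ 1) :
    ∃ q, aeval (polyIter (wordPolynomials (Fin 2) φ) l) (scalarObstruction W q) ≠ 0 := by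
  obtain ⟨K, _, z, U, hU, hinj⟩ := exists_generic_matrices hφ l
  by_contra! h
  refine hW ((injective_iff_map_eq_one _).1 hinj W ((projRep_eq_one_iff_aeval hU W).2 fun q => ?_))
  rw [aeval_polyMap, h, map_zero]

end Generic

theorem exists_finite_periodic_quotients [Finite α] (hφ : Function.Injective φ) :
    ∃ N : ℕ, ∀ p : ℕ, p.Prime → N < p →
      ∃ (P₀ : Type) (_ : Group P₀) (_ : Finite P₀) (γ₀ : FreeGroup α →* P₀) (m : ℕ), 1 ≤ m ∧
        (∀ V, γ₀ (φ^[m] V) = γ₀ V) ∧ ∀ W ≠ 1,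
          ∃ (P : Type) (_ : Group P) (_ : Finite P) (γ : FreeGroup α →* P) (n : ℕ),
            (∀ V, γ (φ^[m * p ^ n] V) = γ V) ∧ γ W ≠ 1 ∧ ∀ V, γ₀ V = 1 → γ V ^ p ^ n = 1 := by
  classical
  have := Fintype.ofFinite α
  obtain ⟨l, N, hN⟩ := exists_isFixedPt_isIdempotentElem_jacobian
    (aeval_polyIter_detProduct_ne_zero hφ _)
  refine ⟨N, fun p hp hNp => ?_⟩
  obtain ⟨F, _, _, _, a, m, hm, ha, hdet, hidem, hrank⟩ := hN p hp hNp
  obtain ⟨Ua, hUa⟩ := isUnit_aeval_detProduct_iff.1 hdet.isUnit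
  refine ⟨PGL(Fin 2, F), inferInstance, finite_projGenLinGroup, projRep Ua, m, hm,
    projRep_iterate_of_isFixedPt hUa ha, fun W hW => ?_⟩
  obtain ⟨q, hq⟩ := exists_aeval_polyIter_scalarObstruction_ne_zero hφ l hW
  obtain ⟨n, R, _, _, _, π, y, hπ, hker, hpn, rfl, hy, hyq⟩ :=
    exists_isFixedPt_lift_aeval_ne_zero hp hm ha hidem hrank hq
  obtain ⟨Uy, hUy, hmap⟩ := exists_map_eq_of_isLocalHom (.of_surjective _ hπ) hUa
  refine ⟨PGL(Fin 2, R), inferInstance, finite_projGenLinGroup, projRep Uy, n,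
    projRep_iterate_of_isFixedPt hUy hy, ?_, fun V hV => ?_⟩
  · exact mt (projRep_eq_one_iff_aeval hUy W).1 fun h => hyq (h q)
  · refine pow_eq_one_of_projGenLinGroup_map_eq_one hπ hker hpn ?_
    rw [map_projRep, _root_.funext hmap, hV]

end Separation

end FiniteQuotients

section ResiduallyFiniteP

variable {p : ℕ} {G : Type*} [Group G]

theorem ResiduallyFiniteP.of_forall_exists_finite
    (h : ∀ g : G, g ≠ 1 → ∃ (Q : Type) (_ : Group Q) (_ : Finite Q) (f : G →* Q),
      (∀ x, ∃ s : ℕ, f x ^ p ^ s = 1) ∧ f g ≠ 1) : ResiduallyFiniteP p G := by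
  intro g hg
  obtain ⟨Q, _, _, f, hf, hfg⟩ := h g hg
  refine ⟨f.range, inferInstance, Fintype.ofFinite _, f.rangeRestrict,
    f.rangeRestrict_surjective, ?_, fun h => hfg (congrArg Subtype.val h)⟩
  rintro ⟨_, x, rfl⟩
  exact (hf x).imp fun s hs => Subtype.ext hs

theorem exists_finite_pow_eq_one_and_ne_one_of_intHom (hp : 1 < p) (f : G →* Multiplicative ℤ)
    {g : G} (hg : f g ≠ 1) :
    ∃ (Q : Type) (_ : Group Q) (_ : Finite Q) (f' : G →* Q),
      (∀ x, ∃ s : ℕ, f' x ^ p ^ s = 1) ∧ f' g ≠ 1 := by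
  set s := (f g).toAdd.natAbs
  have : NeZero (p ^ s) := ⟨by positivity⟩
  refine ⟨Multiplicative (ZMod (p ^ s)), inferInstance, inferInstanceAs (Finite (ZMod _)),
    (AddMonoidHom.toMultiplicative (Int.castAddHom (ZMod (p ^ s)))).comp f, fun x => ⟨s, ?_⟩,
    fun h => ?_⟩
  · exact ofAdd_eq_one.2 (by simp)
  · have hdvd : p ^ s ∣ s := Int.natCast_dvd.1 ((ZMod.intCast_zmod_eq_zero_iff_dvd _ _).1 h)
    have hs : 0 < s := Int.natAbs_pos.2 hg
    exact (Nat.le_of_dvd hs hdvd).not_gt (Nat.lt_pow_self hp)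

end ResiduallyFiniteP

namespace MappingTorus

variable {k : ℕ} (φ : FreeGroup (Fin k) →* FreeGroup (Fin k))

/-- The generator `t` of the mapping torus. -/
def stableLetter : MappingTorus k φ :=
  PresentedGroup.of none

/-- The canonical map from the free group to the mapping torus. -/
def fibreInclusion : FreeGroup (Fin k) →* MappingTorus k φ :=
  (PresentedGroup.mk (mappingTorusRels k φ)).comp (FreeGroup.map some)

theorem fibreInclusion_of (i : Fin k) : fibreInclusion φ (.of i) = PresentedGroup.of (some i) :=
  congrArg (PresentedGroup.mk _) (FreeGroup.map.of)

theorem range_fibreInclusion : (fibreInclusion φ).range = freeFibre k φ := by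
  rw [MonoidHom.range_eq_map, ← FreeGroup.closure_range_of, MonoidHom.map_closure,
    ← Set.range_comp]
  exact congrArg (Subgroup.closure ∘ Set.range) (funext (fibreInclusion_of φ))

theorem semiconjBy_stableLetter (W : FreeGroup (Fin k)) :
    SemiconjBy (stableLetter φ) (fibreInclusion φ W) (fibreInclusion φ (φ W)) := by
  refine mul_inv_eq_iff_eq_mul.1 (DFunLike.congr_fun
    (f := (MulAut.conj (stableLetter φ)).toMonoidHom.comp (fibreInclusion φ))
    (g := (fibreInclusion φ).comp φ) (FreeGroup.ext_hom _ _ fun i => ?_) W)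
  exact mul_inv_eq_one.1 (PresentedGroup.one_of_mem ⟨i, rfl⟩)

theorem semiconjBy_stableLetter_pow (n : ℕ) (W : FreeGroup (Fin k)) :
    SemiconjBy (stableLetter φ ^ n) (fibreInclusion φ W) (fibreInclusion φ (φ^[n] W)) := by
  induction n generalizing W with
  | zero => rw [pow_zero]; exact .one_left _
  | succ n ih => rw [pow_succ]; exact (ih _).mul_left (semiconjBy_stableLetter φ W)

variable {φ}

section Lift

variable {Q : Type*} [Group Q] {r : FreeGroup (Fin k) →* Q} {t : Q}

/-- The universal property of the mapping torus. -/
def lift (r : FreeGroup (Fin k) →* Q) (t : Q) (h : ∀ W, SemiconjBy t (r W) (r (φ W))) :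
    MappingTorus k φ →* Q :=
  PresentedGroup.toGroup (f := fun o => o.elim t fun i => r (.of i)) <| by
    have hr (W : FreeGroup (Fin k)) :
        FreeGroup.lift (fun o => o.elim t fun i => r (.of i)) (FreeGroup.map some W) = r W :=
      DFunLike.congr_fun (f := (FreeGroup.lift _).comp (FreeGroup.map some))
        (FreeGroup.ext_hom _ _ fun i => by simp) W
    rintro _ ⟨i, rfl⟩
    simp only [map_mul, map_inv, hr, FreeGroup.lift_apply_of, Option.elim_none, (h _).eq,
      mul_inv_cancel_right, mul_inv_cancel]

theorem lift_stableLetter (h : ∀ W, SemiconjBy t (r W) (r (φ W))) :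
    lift r t h (stableLetter φ) = t :=
  PresentedGroup.toGroup.of _

theorem lift_fibreInclusion (h : ∀ W, SemiconjBy t (r W) (r (φ W))) (W : FreeGroup (Fin k)) :
    lift r t h (fibreInclusion φ W) = r W :=
  DFunLike.congr_fun (f := (lift r t h).comp (fibreInclusion φ))
    (FreeGroup.ext_hom _ _ fun i => by
      rw [MonoidHom.comp_apply, fibreInclusion_of]; exact PresentedGroup.toGroup.of _) W

theorem hom_ext {f f' : MappingTorus k φ →* Q} (ht : f (stableLetter φ) = f' (stableLetter φ))
    (hW : ∀ W, f (fibreInclusion φ W) = f' (fibreInclusion φ W)) : f = f' := by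
  refine PresentedGroup.ext fun o => ?_
  cases o with
  | none => exact ht
  | some i => rw [← fibreInclusion_of, hW]

end Lift

/-- The exponent sum of the stable letter. -/
def degree : MappingTorus k φ →* Multiplicative ℤ :=
  lift 1 (.ofAdd 1) fun _ => .one_right _

theorem degree_stableLetter : degree (stableLetter φ) = .ofAdd 1 :=
  lift_stableLetter _

theorem degree_fibreInclusion (W : FreeGroup (Fin k)) : degree (fibreInclusion φ W) = 1 :=
  lift_fibreInclusion _ W

theorem eventually_exists_stableLetter_pow_mul_eq (g : MappingTorus k φ) :
    ∀ᶠ n : ℕ in .atTop,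
    ∃ W, stableLetter φ ^ n * g =
      fibreInclusion φ W * stableLetter φ ^ (n + (degree g).toAdd) := by
  have hfibre (V : FreeGroup (Fin k)) {g : MappingTorus k φ} {n : ℕ}
      (hg : ∃ W, stableLetter φ ^ n * g =
        fibreInclusion φ W * stableLetter φ ^ (n + (degree g).toAdd)) :
      ∃ W, stableLetter φ ^ n * (fibreInclusion φ V * g) = fibreInclusion φ W *
        stableLetter φ ^ (n + (degree (fibreInclusion φ V * g)).toAdd) := by
    obtain ⟨W, hW⟩ := hg
    refine ⟨φ^[n] V * W, ?_⟩
    rw [← mul_assoc, (semiconjBy_stableLetter_pow φ n V).eq, mul_assoc, hW, map_mul, mul_assoc,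
      map_mul degree, degree_fibreInclusion, one_mul]
  have hmem : g ∈ Subgroup.closure (Set.range PresentedGroup.of) := by
    rw [PresentedGroup.closure_range_of]; trivial
  induction hmem using Subgroup.closure_induction_left with
  | one => exact .of_forall fun n => ⟨1, by simp⟩
  | mul_left x hx y _ ih =>
    obtain ⟨_ | i, rfl⟩ := hx
    · refine ((Filter.tendsto_add_atTop_nat 1).eventually ih).mono fun n ⟨W, hW⟩ => ⟨W, ?_⟩
      change _ * (stableLetter φ * y) = _ * _ ^ (_ + (degree (stableLetter φ * y)).toAdd)
      rw [← mul_assoc, ← pow_succ, hW, map_mul, degree_stableLetter, toAdd_mul, toAdd_ofAdd,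
        Nat.cast_succ, add_assoc]
    · rw [← fibreInclusion_of]
      exact ih.mono fun n => hfibre _
  | inv_mul_cancel x hx y _ ih =>
    obtain ⟨_ | i, rfl⟩ := hx
    · rw [← Filter.map_add_atTop_eq_nat 1, Filter.eventually_map]
      refine ih.mono fun n ⟨W, hW⟩ => ⟨W, ?_⟩
      change _ * ((stableLetter φ)⁻¹ * y) = _ * _ ^ (_ + (degree ((stableLetter φ)⁻¹ * y)).toAdd)
      rw [pow_succ, ← mul_assoc, mul_inv_cancel_right, hW, map_mul, map_inv, degree_stableLetter,
        toAdd_mul, toAdd_inv, toAdd_ofAdd, Nat.cast_succ, add_assoc, add_neg_cancel_left]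
    · rw [← fibreInclusion_of, ← map_inv]
      exact ih.mono fun n => hfibre _

section Periodic

variable {P : Type*} [Group P] {γ : FreeGroup (Fin k) →* P} {M : ℕ}

theorem apply_iterate_val_natCast (hγ : ∀ V, γ (φ^[M] V) = γ V) (j : ℕ)
    (W : FreeGroup (Fin k)) : γ (φ^[(j : ZMod M).val] W) = γ (φ^[j] W) := by
  have hperiodic : Function.Periodic (fun j => γ (φ^[j] W)) M := fun j => by
    simp only [add_comm j, Function.iterate_add_apply, hγ]
  rw [ZMod.val_natCast]
  exact hperiodic.map_mod_nat j

/-- The homomorphism to a wreath product with a cyclic group of order `M` that collects the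
homomorphisms `γ ∘ φ^i` for `i < M`. -/
def orbitHom (φ : FreeGroup (Fin k) →* FreeGroup (Fin k)) (γ : FreeGroup (Fin k) →* P) (M : ℕ) :
    FreeGroup (Fin k) →* P ≀ᵣ Multiplicative (ZMod M) where
  toFun W := ⟨fun i => γ (φ^[i.toAdd.val] W), 1⟩
  map_one' := by ext <;> simp
  map_mul' V W := by ext <;> simp

theorem orbitHom_eq_one_iff (hγ : ∀ V, γ (φ^[M] V) = γ V) (W : FreeGroup (Fin k)) :
    orbitHom φ γ M W = 1 ↔ ∀ j : ℕ, γ (φ^[j] W) = 1 := by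
  rw [RegularWreathProduct.ext_iff]
  refine ⟨fun h j => ?_, fun h => ⟨funext fun i => h _, rfl⟩⟩
  rw [← apply_iterate_val_natCast hγ]
  exact congrFun h.1 (.ofAdd (j : ZMod M))

variable [NeZero M]

theorem semiconjBy_orbitHom (hγ : ∀ V, γ (φ^[M] V) = γ V) (W : FreeGroup (Fin k)) :
    SemiconjBy (.inl (.ofAdd (-1))) (orbitHom φ γ M W) (orbitHom φ γ M (φ W)) := by
  refine RegularWreathProduct.ext (funext fun i => ?_) (mul_comm _ _)
  have h := apply_iterate_val_natCast hγ (i.toAdd.val + 1) W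
  rw [Nat.cast_succ, ZMod.natCast_zmod_val, add_comm] at h
  simpa [orbitHom] using h

variable (hγ : ∀ V, γ (φ^[M] V) = γ V)

/-- The homomorphism on the mapping torus induced by a homomorphism `γ` with `γ ∘ φ^M = γ`. The
stable letter acts as a shift. -/
def wreathHom : MappingTorus k φ →* P ≀ᵣ Multiplicative (ZMod M) :=
  lift (orbitHom φ γ M) (.inl (.ofAdd (-1))) (semiconjBy_orbitHom hγ)

theorem wreathHom_stableLetter : wreathHom hγ (stableLetter φ) = .inl (.ofAdd (-1)) :=
  lift_stableLetter _

theorem wreathHom_fibreInclusion_eq_one_iff (W : FreeGroup (Fin k)) :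
    wreathHom hγ (fibreInclusion φ W) = 1 ↔ ∀ j : ℕ, γ (φ^[j] W) = 1 := by
  rw [wreathHom, lift_fibreInclusion, orbitHom_eq_one_iff hγ]

theorem dvd_degree_of_wreathHom_eq_one {g : MappingTorus k φ} (hg : wreathHom hγ g = 1) :
    (M : ℤ) ∣ (degree g).toAdd := by
  have hcomp : RegularWreathProduct.rightHom.comp (wreathHom hγ) =
      (AddMonoidHom.toMultiplicative (-Int.castAddHom (ZMod M))).comp degree := by
    refine hom_ext ?_ fun W => ?_
    · simp [wreathHom_stableLetter, degree_stableLetter]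
    · rw [MonoidHom.comp_apply, MonoidHom.comp_apply, degree_fibreInclusion, map_one, wreathHom,
        lift_fibreInclusion]
      rfl
  have h : -((degree g).toAdd : ZMod M) = 0 := by
    simpa [hg] using (DFunLike.congr_fun hcomp g).symm
  rwa [neg_eq_zero, ZMod.intCast_zmod_eq_zero_iff_dvd] at h

theorem wreathHom_stableLetter_zpow {d : ℤ} (hd : (M : ℤ) ∣ d) :
    wreathHom hγ (stableLetter φ ^ d) = 1 := by
  have hcast : (.ofAdd (-1) : Multiplicative (ZMod M)) ^ d = 1 := by
    rw [← ofAdd_zsmul, ofAdd_eq_one, zsmul_eq_mul, (ZMod.intCast_zmod_eq_zero_iff_dvd _ _).2 hd,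
      zero_mul]
  rw [map_zpow, wreathHom_stableLetter, ← map_zpow, hcast, map_one]

theorem semiconjBy_wreathHom {g : MappingTorus k φ} {n : ℕ} {W : FreeGroup (Fin k)}
    (hg : stableLetter φ ^ n * g =
      fibreInclusion φ W * stableLetter φ ^ (n + (degree g).toAdd))
    (hd : (M : ℤ) ∣ (degree g).toAdd) :
    SemiconjBy (wreathHom hγ (stableLetter φ ^ n)) (wreathHom hγ g)
      (wreathHom hγ (fibreInclusion φ W)) := by
  rw [SemiconjBy, ← map_mul, hg, zpow_add, map_mul, map_mul, wreathHom_stableLetter_zpow hγ hd,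
    mul_one, zpow_natCast]

/-- The first power makes the degree divisible by the larger period, the second kills the values of
`γ` on the kernel of `γ₀`. -/
theorem wreathHom_pow_pow_eq_one {P₀ : Type*} [Group P₀] {γ₀ : FreeGroup (Fin k) →* P₀} {m q : ℕ}
    [NeZero m] [NeZero (m * q)] (hγ₀ : ∀ V, γ₀ (φ^[m] V) = γ₀ V)
    (hγ : ∀ V, γ (φ^[m * q] V) = γ V) (hpow : ∀ V, γ₀ V = 1 → γ V ^ q = 1) {g : MappingTorus k φ}
    (hg : wreathHom hγ₀ g = 1) : wreathHom hγ (g ^ q) ^ q = 1 := by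
  obtain ⟨n, V, hV⟩ := (eventually_exists_stableLetter_pow_mul_eq (g ^ q)).exists
  have hdvd : ((m * q : ℕ) : ℤ) ∣ (degree (g ^ q)).toAdd := by
    rw [map_pow, toAdd_pow, nsmul_eq_mul, Nat.cast_mul, mul_comm]
    exact mul_dvd_mul_left _ (dvd_degree_of_wreathHom_eq_one hγ₀ hg)
  have hγ₀V (j : ℕ) : γ₀ (φ^[j] V) = 1 := by
    refine (wreathHom_fibreInclusion_eq_one_iff hγ₀ V).1 ?_ j
    have hdvd' := (Int.natCast_dvd_natCast.2 (dvd_mul_right m q)).trans hdvd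
    exact (semiconjBy_wreathHom hγ₀ hV hdvd').eq_one_iff.1 (by rw [map_pow, hg, one_pow])
  have hγV : wreathHom hγ (fibreInclusion φ V) ^ q = 1 := by
    rw [← map_pow, ← map_pow, wreathHom_fibreInclusion_eq_one_iff]
    intro j
    rw [iterate_map_pow, map_pow, hpow _ (hγ₀V j)]
  exact ((semiconjBy_wreathHom hγ hV hdvd).pow_right q).eq_one_iff.2 hγV

end Periodic

section Subgroup

theorem fibreInclusion_injective (hφ : Function.Injective φ) :
    Function.Injective (fibreInclusion φ) := by
  obtain ⟨N, hN⟩ := exists_finite_periodic_quotients hφ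
  obtain ⟨p, hNp, hp⟩ := Nat.exists_infinite_primes (N + 1)
  obtain ⟨_, _, _, _, m, hm, -, hsep⟩ := hN p hp hNp
  refine (injective_iff_map_eq_one _).2 fun W => not_imp_not.1 fun hW => ?_
  obtain ⟨P, _, _, γ, n, hγ, hγW, -⟩ := hsep W hW
  have : NeZero (m * p ^ n) := ⟨(Nat.mul_pos hm (pow_pos hp.pos n)).ne'⟩
  refine fun h => hγW ((wreathHom_fibreInclusion_eq_one_iff hγ W).1 ?_ 0)
  rw [h, map_one]

theorem isFreeGroup_freeFibre_inf (hφ : Function.Injective φ)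
    (N : Subgroup (MappingTorus k φ)) : IsFreeGroup ↥(freeFibre k φ ⊓ N) := by
  rw [← range_fibreInclusion, ← Subgroup.map_comap_eq]
  exact .ofMulEquiv ((N.comap _).equivMapOfInjective _ (fibreInclusion_injective hφ))

theorem conj_stableLetter_pow_mem_freeFibre_inf {N : Subgroup (MappingTorus k φ)} [N.Normal]
    (m : ℕ) {g : MappingTorus k φ} (hg : g ∈ freeFibre k φ ⊓ N) :
    stableLetter φ ^ m * g * (stableLetter φ ^ m)⁻¹ ∈ freeFibre k φ ⊓ N := by
  refine ⟨?_, Subgroup.Normal.conj_mem ‹_› g hg.2 _⟩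
  rw [← range_fibreInclusion] at hg ⊢
  obtain ⟨⟨W, rfl⟩, -⟩ := hg
  exact ⟨φ^[m] W, eq_mul_inv_of_mul_eq (semiconjBy_stableLetter_pow φ m W).eq.symm⟩

theorem eq_closure_freeFibre_inf {N : Subgroup (MappingTorus k φ)} {m : ℕ} (hm : 1 ≤ m)
    (ht : stableLetter φ ^ m ∈ N) (hdeg : ∀ g ∈ N, (m : ℤ) ∣ (degree g).toAdd) :
    N = Subgroup.closure (↑(freeFibre k φ ⊓ N) ∪ {stableLetter φ ^ m}) := by
  set K := Subgroup.closure (↑(freeFibre k φ ⊓ N) ∪ {stableLetter φ ^ m})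
  have hKN : K ≤ N := (Subgroup.closure_le _).2 <|
    Set.union_subset (fun _ h => h.2) (Set.singleton_subset_iff.2 ht)
  have hfibre {W : FreeGroup (Fin k)} (hW : fibreInclusion φ W ∈ N) : fibreInclusion φ W ∈ K :=
    Subgroup.subset_closure (.inl ⟨range_fibreInclusion φ ▸ ⟨W, rfl⟩, hW⟩)
  have hstable {d : ℤ} (hd : (m : ℤ) ∣ d) : stableLetter φ ^ d ∈ K := by
    obtain ⟨c, rfl⟩ := hd
    rw [zpow_mul, zpow_natCast]
    exact K.zpow_mem (Subgroup.subset_closure (.inr rfl)) c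
  refine le_antisymm (fun g hg => ?_) hKN
  have htendsto : Filter.Tendsto (m * ·) .atTop .atTop := Filter.tendsto_id.const_mul_atTop' hm
  obtain ⟨n, W, hW⟩ :=
    (htendsto.eventually (eventually_exists_stableLetter_pow_mul_eq g)).exists
  have hleft : (m : ℤ) ∣ (m * n : ℕ) := Int.natCast_dvd_natCast.2 (dvd_mul_right m n)
  have hright := dvd_add hleft (hdeg g hg)
  rw [← zpow_natCast] at hW
  have hWN : fibreInclusion φ W ∈ N := by
    rw [← N.mul_mem_cancel_right (hKN (hstable hright)), ← hW]
    exact N.mul_mem (hKN (hstable hleft)) hg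
  rw [← K.mul_mem_cancel_left (hstable hleft), hW]
  exact K.mul_mem (hfibre hWN) (hstable hright)

end Subgroup

theorem exists_finiteIndex_normal_and_finite_quotients (hφ : Function.Injective φ) :
    ∃ B : ℕ, ∀ p : ℕ, p.Prime → B < p →
      ∃ N : Subgroup (MappingTorus k φ), N.FiniteIndex ∧ N.Normal ∧
        (∃ m : ℕ, 1 ≤ m ∧ stableLetter φ ^ m ∈ N ∧ ∀ g ∈ N, (m : ℤ) ∣ (degree g).toAdd) ∧
        ∀ W ≠ 1, ∃ (Q : Type) (_ : Group Q) (_ : Finite Q) (f : MappingTorus k φ →* Q),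
          (∀ g ∈ N, ∃ s : ℕ, f g ^ p ^ s = 1) ∧ f (fibreInclusion φ W) ≠ 1 := by
  obtain ⟨B, hB⟩ := exists_finite_periodic_quotients hφ
  refine ⟨B, fun p hp hBp => ?_⟩
  obtain ⟨P₀, _, _, γ₀, m, hm, hγ₀, hsep⟩ := hB p hp hBp
  have : NeZero m := ⟨Nat.one_le_iff_ne_zero.1 hm⟩
  have : NeZero p := ⟨hp.ne_zero⟩
  have (M : ℕ) [NeZero M] : Finite (Multiplicative (ZMod M)) := inferInstanceAs (Finite (ZMod M))
  refine ⟨(wreathHom hγ₀).ker, inferInstance, inferInstance,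
    ⟨m, hm, ?_, fun g => dvd_degree_of_wreathHom_eq_one hγ₀⟩, fun W hW => ?_⟩
  · rw [MonoidHom.mem_ker, ← zpow_natCast, wreathHom_stableLetter_zpow hγ₀ dvd_rfl]
  · obtain ⟨P, _, _, γ, n, hγ, hγW, hpow⟩ := hsep W hW
    refine ⟨_, inferInstance, inferInstance, wreathHom hγ, fun g hg => ⟨n + n, ?_⟩, fun h => ?_⟩
    · rw [pow_add, pow_mul, ← map_pow, wreathHom_pow_pow_eq_one hγ₀ hγ hpow hg]
    · exact hγW ((wreathHom_fibreInclusion_eq_one_iff hγ W).1 h 0)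

theorem residuallyFiniteP_of_fibreInclusion {p : ℕ} (hp : 1 < p) {N : Subgroup (MappingTorus k φ)}
    (hN : ∀ W ≠ 1, ∃ (Q : Type) (_ : Group Q) (_ : Finite Q) (f : MappingTorus k φ →* Q),
      (∀ g ∈ N, ∃ s : ℕ, f g ^ p ^ s = 1) ∧ f (fibreInclusion φ W) ≠ 1) :
    ResiduallyFiniteP p N := by
  refine .of_forall_exists_finite fun ⟨g, hgN⟩ hg => ?_
  by_cases hdeg : degree g = 1
  · obtain ⟨n, W, hW⟩ := (eventually_exists_stableLetter_pow_mul_eq g).exists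
    have hconj : SemiconjBy (stableLetter φ ^ n) g (fibreInclusion φ W) := by
      rwa [hdeg, toAdd_one, add_zero, zpow_natCast] at hW
    have hW1 : W ≠ 1 := by
      rintro rfl
      exact hg (Subtype.ext (hconj.eq_one_iff.2 (map_one _)))
    obtain ⟨Q, _, _, f, hf, hfW⟩ := hN W hW1
    exact ⟨Q, _, ‹_›, f.comp N.subtype, fun x => hf x x.2, mt (hconj.map f).eq_one_iff.1 hfW⟩
  · exact exists_finite_pow_eq_one_and_ne_one_of_intHom hp (degree.comp N.subtype) hdeg

end MappingTorus

/-- For every sufficiently large prime `p`, the mapping torus of an injective endomorphism of a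
finitely generated free group has a finite index subgroup `N` that is residually (finite `p`)
and that is itself an ascending HNN extension of a free group: `N` is generated by `F_k ∩ N`
together with `t₁ = t^m` for some `m ≥ 1`, with `t₁ (F_k ∩ N) t₁⁻¹ ⊆ F_k ∩ N` and
`F_k ∩ N` free. -/
theorem mappingTorus_virtually_residually_p_ascending_hnn (k : ℕ)
    (φ : FreeGroup (Fin k) →* FreeGroup (Fin k)) (hφ : Function.Injective φ) :
    ∃ Nbd : ℕ, ∀ p : ℕ, p.Prime → p > Nbd →
      ∃ N : Subgroup (MappingTorus k φ), N.FiniteIndex ∧ ResiduallyFiniteP p ↥N ∧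
        ∃ m : ℕ, 1 ≤ m ∧
          (∀ g ∈ freeFibre k φ ⊓ N,
              (PresentedGroup.of (none : Option (Fin k))) ^ m * g *
                ((PresentedGroup.of (none : Option (Fin k))) ^ m)⁻¹ ∈ freeFibre k φ ⊓ N) ∧
          N = Subgroup.closure
              ((↑(freeFibre k φ ⊓ N) : Set (MappingTorus k φ)) ∪
                {(PresentedGroup.of (none : Option (Fin k))) ^ m}) ∧
          IsFreeGroup ↥(freeFibre k φ ⊓ N) := by
  obtain ⟨B, hB⟩ := MappingTorus.exists_finiteIndex_normal_and_finite_quotients hφ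
  refine ⟨B, fun p hp hBp => ?_⟩
  obtain ⟨N, hindex, hnormal, ⟨m, hm, hmem, hdvd⟩, hsep⟩ := hB p hp hBp
  exact ⟨N, hindex, MappingTorus.residuallyFiniteP_of_fibreInclusion hp.one_lt hsep, m, hm,
    fun g => MappingTorus.conj_stableLetter_pow_mem_freeFibre_inf m,
    MappingTorus.eq_closure_freeFibre_inf hm hmem hdvd,
    MappingTorus.isFreeGroup_freeFibre_inf hφ N⟩
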